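/- arXiv:1910.02417 — 2 statements merged into one kernel-verified Lean document; each statement's English description precedes it below -/
import Mathlib

section
/- A finite multiset of n ≥ 6 triples admits a nice two-coloring if and only if it is fair and non-special. -/
/-- `f` is a *nice (total) `c`-coloring* of the multiset `T` of tuples: the color
classes `f j` sum to `T`, and for each color `j` and every element `i` appearing in
some tuple of `T` there is a tuple of color `j` not containing `i`. -/
def NiceColoring (c : ℕ) (T : Multiset (Finset ℕ+))
    (f : Fin c → Multiset (Finset ℕ+)) : Prop :=
  (∑ j, f j) = T ∧
  ∀ j : Fin c, ∀ i : ℕ+, (∃ t ∈ T, i ∈ t) → ∃ t ∈ f j, i ∉ t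

/-- `T` is *`c`-fair*: every element appearing in some tuple of `T` is absent from at
least `c` of the tuples (counted with multiplicity). -/
def CFair (c : ℕ) (T : Multiset (Finset ℕ+)) : Prop :=
  ∀ i : ℕ+, (∃ t ∈ T, i ∈ t) →
    c ≤ Multiset.card (T.filter (fun t => i ∉ t))

/-- A multiset `T` of `n` triples is *special*: for some three distinct elements
`a, b, c` it consists of `n - 3` copies of the triple `{a, b, c}` together with three
further triples, one containing `a`, one containing `b` and one containing `c`, whose
other elements are distinct from `a`, `b`, `c`. -/
def Special (T : Multiset (Finset ℕ+)) : Prop :=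
  ∃ a b c : ℕ+, a ≠ b ∧ a ≠ c ∧ b ≠ c ∧
    ∃ t₁ t₂ t₃ : Finset ℕ+,
      T = Multiset.replicate (Multiset.card T - 3) {a, b, c} + {t₁, t₂, t₃} ∧
      a ∈ t₁ ∧ b ∉ t₁ ∧ c ∉ t₁ ∧
      a ∉ t₂ ∧ b ∈ t₂ ∧ c ∉ t₂ ∧
      a ∉ t₃ ∧ b ∉ t₃ ∧ c ∈ t₃

/-!
Color the indices of a family of at least six triples, and call the members avoiding `i` the
absentees of `i`: a nice coloring is one in which every set of absentees meets both colors. If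
there is none, then whenever a set `A` of triples has no common element, its complement has one,
so `A` contains all absentees of some element. Applied to small sets `A`, this drives three cases.

* Every element has at least three absentees. Then any two triples meet in two points, hence all
  triples lie in a four-point set and each of its four triples occurs. One copy of each of the four
  forms a color class.
* Some element `c` has exactly two absentees `u`, `v`, and every element of `t u` or `t v` has at
  least two absentees outside `{u, v}`. Then all other triples contain `c` and meet both `t u` and
  `t v`, and comparing the colorings with classes `{u, f, r}` and `{v, g, s}` is enough.
* Otherwise the absentee pairs of two elements form a path `u`, `v`, `f`. All other triples are
  `{c, x, z j}`, and either a coloring can be written down or a third element has exactly the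
  absentees `u`, `f`. The resulting triangle of absentee pairs is what being special means, and a
  triangle cannot be two-colored without a monochromatic edge.
-/

open Finset

/-! ### Triples -/

section Triples

variable {α : Type*} [DecidableEq α] {s : Finset α} {a b c : α}

theorem eq_triple_of_mem (hs : #s = 3) (ha : a ∈ s) (hb : b ∈ s) (hc : c ∈ s) (hab : a ≠ b)
    (hac : a ≠ c) (hbc : b ≠ c) : s = {a, b, c} := by
  refine (eq_of_subset_of_card_le (by grind) ?_).symm
  rw [hs, card_eq_three.2 ⟨a, b, c, hab, hac, hbc, rfl⟩]

theorem exists_eq_triple_of_mem (hs : #s = 3) (ha : a ∈ s) (hb : b ∈ s) (hab : a ≠ b) :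
    ∃ z, z ≠ a ∧ z ≠ b ∧ s = {a, b, z} := by
  obtain ⟨z, hz, hzab⟩ := exists_mem_notMem_of_card_lt_card (s := {a, b}) (t := s)
    (card_le_two.trans_lt (by omega))
  simp only [mem_insert, mem_singleton, not_or] at hzab
  exact ⟨z, hzab.1, hzab.2, eq_triple_of_mem hs ha hb hz hab (Ne.symm hzab.1) (Ne.symm hzab.2)⟩

theorem exists_forall_notMem_eq_triple {ι : Type*} {t : ι → Finset α} {S : Finset ι}
    (hcard : ∀ v, #(t v) = 3) (hab : a ≠ b) (hmem : ∀ r ∉ S, a ∈ t r ∧ b ∈ t r) :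
    ∃ z : ι → α, ∀ r ∉ S, t r = {a, b, z r} := by
  have hthird : ∀ r, ∃ z, r ∉ S → t r = {a, b, z} := by
    intro r
    by_cases hr : r ∈ S
    · exact ⟨a, fun h ↦ absurd hr h⟩
    · obtain ⟨z, -, -, hz⟩ := exists_eq_triple_of_mem (hcard r) (hmem r hr).1 (hmem r hr).2 hab
      exact ⟨z, fun _ ↦ hz⟩
  exact Classical.skolem.1 hthird

theorem exists_eq_insert_erase_of_two_le_card_inter {s' : Finset α} (hs : #s = 3)
    (hs' : #s' = 3) (hinter : 2 ≤ #(s ∩ s')) (ha : a ∈ s) (ha' : a ∉ s') :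
    ∃ q ∉ s, s' = insert q (s.erase a) := by
  have herase : #(s.erase a) = 2 := by rw [card_erase_of_mem ha, hs]
  have hsub : s.erase a ⊆ s' := by
    have : s ∩ s' = s.erase a := eq_of_subset_of_card_le (by grind) (by omega)
    exact this ▸ inter_subset_right
  obtain ⟨q, hq, hqs'⟩ := exists_eq_insert_iff.2 ⟨hsub, by omega⟩
  exact ⟨q, by grind, hqs'.symm⟩

theorem eq_of_two_le_card_insert_erase_inter {p q : α} (hs : #s = 3) (ha : a ∈ s) (hb : b ∈ s)
    (hab : a ≠ b) (hp : p ∉ s) (hq : q ∉ s)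
    (hinter : 2 ≤ #(insert p (s.erase a) ∩ insert q (s.erase b))) : p = q := by
  by_contra hpq
  have hsub : insert p (s.erase a) ∩ insert q (s.erase b) ⊆ (s.erase a).erase b := by grind
  have := card_le_card hsub
  grind

theorem exists_card_eq_four_of_two_le_card_inter {ι : Type*} [Nonempty ι] {t : ι → Finset α}
    (hcard : ∀ v, #(t v) = 3) (hinter : ∀ v w, 2 ≤ #(t v ∩ t w)) (habs : ∀ i, ∃ v, i ∉ t v) :
    ∃ S : Finset α, #S = 4 ∧ (∀ v, t v ⊆ S) ∧ ∀ i ∈ S, ∃ v, t v = S.erase i := by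
  obtain ⟨u⟩ := ‹Nonempty ι›
  have hswap : ∀ i ∈ t u, ∀ v, i ∉ t v → ∃ q ∉ t u, t v = insert q ((t u).erase i) :=
    fun i hi v hv ↦
      exists_eq_insert_erase_of_two_le_card_inter (hcard u) (hcard v) (hinter u v) hi hv
  have hunique : ∀ i ∈ t u, ∀ j ∈ t u, i ≠ j → ∀ p ∉ t u, ∀ v w,
      t v = insert p ((t u).erase i) → j ∉ t w → t w = insert p ((t u).erase j) := by
    intro i hi j hj hij p hp v w hv hw
    obtain ⟨q, hq, hwq⟩ := hswap j hj w hw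
    rw [hwq, eq_of_two_le_card_insert_erase_inter (hcard u) hi hj hij hp hq
      (hv ▸ hwq ▸ hinter v w)]
  obtain ⟨a, ha, b, hb, hab⟩ := one_lt_card.1 (by grind : 1 < #(t u))
  obtain ⟨va, hva⟩ := habs a
  obtain ⟨vb, hvb⟩ := habs b
  obtain ⟨p, hp, hpa⟩ := hswap a ha va hva
  have hpb := hunique a ha b hb hab p hp va vb hpa hvb
  have hpi : ∀ i ∈ t u, ∀ v, i ∉ t v → t v = insert p ((t u).erase i) := by
    intro i hi v hv
    by_cases hia : i = a
    · subst hia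
      exact hunique b hb i hi hab.symm p hp vb v hpb hv
    · exact hunique a ha i hi (Ne.symm hia) p hp va v hpa hv
  refine ⟨insert p (t u), by rw [card_insert_of_notMem hp, hcard], fun v ↦ ?_, fun i hi ↦ ?_⟩
  · by_cases hsub : t u ⊆ t v
    · rw [← eq_of_subset_of_card_le hsub (by simp [hcard])]
      exact subset_insert p (t u)
    · obtain ⟨i, hi, hiv⟩ := not_subset.1 hsub
      rw [hpi i hi v hiv]
      exact insert_subset_insert p (erase_subset i (t u))
  · obtain rfl | hi := mem_insert.1 hi
    · exact ⟨u, (erase_insert hp).symm⟩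
    · obtain ⟨v, hv⟩ := habs i
      exact ⟨v, by rw [hpi i hi v hv, erase_insert_of_ne (ne_of_mem_of_not_mem hi hp).symm]⟩

end Triples

/-! ### Colorings and absentees -/

section Families

variable {ι α : Type*} {t : ι → Finset α} {A : Finset ι}

/-- The members of the family `t` indexed by `A` have empty intersection (over an empty `A` the
intersection is the whole type). This is what niceness asks of a color class. -/
def NoCommonElement (t : ι → Finset α) (A : Finset ι) : Prop :=
  ∀ i, ∃ v ∈ A, i ∉ t v

/-- The family `t` has a nice two-coloring. Only two disjoint color classes are recorded, since
indices outside both can be given either color. -/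
def NicelyTwoColorable (t : ι → Finset α) : Prop :=
  ∃ A B : Finset ι, Disjoint A B ∧ NoCommonElement t A ∧ NoCommonElement t B

theorem exists_forall_notMem_mem [Finite ι] (ht : ¬ NicelyTwoColorable t)
    (hA : NoCommonElement t A) : ∃ i, ∀ v ∉ A, i ∈ t v := by
  classical
  have := Fintype.ofFinite ι
  by_contra! h
  exact ht ⟨A, Aᶜ, disjoint_compl_right, hA, fun i ↦ by simpa using h i⟩

variable [Fintype ι]

theorem exists_notMem_of_card_lt {S : Finset ι} (h : #S < Fintype.card ι) : ∃ k, k ∉ S := by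
  obtain ⟨k, -, hk⟩ := exists_mem_notMem_of_card_lt_card (h.trans_eq card_univ.symm)
  exact ⟨k, hk⟩

variable [DecidableEq α]

/-- The indices of the members of `t` that do not contain `i`. -/
def absentees (t : ι → Finset α) (i : α) : Finset ι := {v | i ∉ t v}

@[simp, grind =]
theorem mem_absentees {v : ι} {i : α} : v ∈ absentees t i ↔ i ∉ t v := by
  simp [absentees]

theorem exists_notMem_notMem_of_card_lt {S : Finset ι} {i : α} (h : #S < #(absentees t i)) :
    ∃ w ∉ S, i ∉ t w := by
  obtain ⟨w, hw, hwS⟩ := exists_mem_notMem_of_card_lt_card h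
  exact ⟨w, hwS, mem_absentees.1 hw⟩

theorem exists_ne_absent (hfair : ∀ i, 2 ≤ #(absentees t i)) (i : α) (p : ι) :
    ∃ w, w ≠ p ∧ i ∉ t w := by
  obtain ⟨w, hw, hi⟩ := exists_notMem_notMem_of_card_lt (S := {p}) (hfair i)
  exact ⟨w, notMem_singleton.1 hw, hi⟩

theorem card_absentees_eq_countP (t : ι → Finset α) (i : α) :
    #(absentees t i) = (univ.val.map t).countP (i ∉ ·) := by
  rw [Multiset.countP_map]
  rfl

theorem NicelyTwoColorable.two_le_card_absentees (h : NicelyTwoColorable t) (i : α) :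
    2 ≤ #(absentees t i) := by
  obtain ⟨A, B, hAB, hA, hB⟩ := h
  obtain ⟨v, hvA, hv⟩ := hA i
  obtain ⟨w, hwB, hw⟩ := hB i
  exact one_lt_card.2
    ⟨v, mem_absentees.2 hv, w, mem_absentees.2 hw, disjoint_iff_ne.1 hAB v hvA w hwB⟩

variable [DecidableEq ι]

/-- The family form of being special: the absentee pairs of three elements form a triangle, so
that every member outside the triangle contains all three elements. -/
def HasAbsenteeTriangle (t : ι → Finset α) : Prop :=
  ∃ (a b c : α) (p q r : ι), p ≠ q ∧ p ≠ r ∧ q ≠ r ∧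
    absentees t a = {q, r} ∧ absentees t b = {p, r} ∧ absentees t c = {p, q}

theorem mem_iff_of_absentees_eq {c : α} {u v : ι} (h : absentees t c = {u, v}) (w : ι) :
    c ∈ t w ↔ w ≠ u ∧ w ≠ v := by
  have : w ∈ absentees t c ↔ w = u ∨ w = v := by simp [h]
  rw [mem_absentees] at this
  tauto

theorem absentees_eq_pair_of_card_le_two {i : α} {q r : ι} (hq : i ∉ t q) (hr : i ∉ t r)
    (hqr : q ≠ r) (hle : #(absentees t i) ≤ 2) : absentees t i = {q, r} :=
  (eq_of_subset_of_card_le (by grind) (by rwa [card_pair hqr])).symm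

theorem NicelyTwoColorable.not_hasAbsenteeTriangle (h : NicelyTwoColorable t) :
    ¬ HasAbsenteeTriangle t := by
  rintro ⟨a, b, c, p, q, r, -, -, -, ha, hb, hc⟩
  obtain ⟨A, B, hAB, hA, hB⟩ := h
  have hmeet : ∀ {i v w}, absentees t i = {v, w} → (v ∈ A ∨ w ∈ A) ∧ (v ∈ B ∨ w ∈ B) := by
    intro i v w hi
    obtain ⟨k, hkA, hk⟩ := hA i
    obtain ⟨l, hlB, hl⟩ := hB i
    have := mem_iff_of_absentees_eq hi
    grind
  have hmeet_a := hmeet ha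
  have hmeet_b := hmeet hb
  have hmeet_c := hmeet hc
  rw [Finset.disjoint_left] at hAB
  grind

end Families

/-! ### Every element has three absentees -/

section ThreeFair

variable {ι α : Type*} [Fintype ι] [DecidableEq α] {t : ι → Finset α}

theorem exists_absent_ne_ne (hfair : ∀ i, 3 ≤ #(absentees t i)) (i : α) (p q : ι) :
    ∃ w, w ≠ p ∧ w ≠ q ∧ i ∉ t w := by
  classical
  obtain ⟨w, hw, hi⟩ := exists_notMem_notMem_of_card_lt (S := {p, q})
    (card_le_two.trans_lt (hfair i))
  grind

theorem not_disjoint_of_three_fair (hfair : ∀ i, 3 ≤ #(absentees t i))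
    (ht : ¬ NicelyTwoColorable t) (u v : ι) : ¬ Disjoint (t u) (t v) := by
  classical
  intro hdisj
  have huv : NoCommonElement t {u, v} := by
    intro i
    have : i ∈ t u → i ∉ t v := fun h ↦ Finset.disjoint_left.1 hdisj h
    grind
  obtain ⟨i, hi⟩ := exists_forall_notMem_mem ht huv
  obtain ⟨w, hwu, hwv, hw⟩ := exists_absent_ne_ne hfair i u v
  grind

theorem exists_mem_iff_notMem_of_inter_eq_singleton (hfair : ∀ i, 3 ≤ #(absentees t i))
    (ht : ¬ NicelyTwoColorable t) {u v w : ι} {x : α} (hx : t v ∩ t w = {x})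
    (hu : x ∉ t u) : ∃ c, ∀ k, c ∈ t k ↔ k ≠ u ∧ k ≠ v ∧ k ≠ w := by
  classical
  have hempty : NoCommonElement t {u, v, w} := by
    intro i
    have : i ∈ t v ∩ t w ↔ i = x := by rw [hx, mem_singleton]
    grind
  obtain ⟨c, hc⟩ := exists_forall_notMem_mem ht hempty
  refine ⟨c, fun k ↦ ⟨fun hck ↦ ?_, fun hk ↦ hc k (by simpa using hk)⟩⟩
  obtain ⟨w₁, h₁⟩ := exists_absent_ne_ne hfair c v w
  obtain ⟨w₂, h₂⟩ := exists_absent_ne_ne hfair c u v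
  obtain ⟨w₃, h₃⟩ := exists_absent_ne_ne hfair c u w
  grind

theorem two_le_card_inter_of_three_fair (hcard : ∀ v, #(t v) = 3)
    (hfair : ∀ i, 3 ≤ #(absentees t i)) (ht : ¬ NicelyTwoColorable t)
    (hn : 6 ≤ Fintype.card ι) (v w : ι) :
    2 ≤ #(t v ∩ t w) := by
  classical
  by_contra! hlt
  have hmeet := not_disjoint_of_three_fair hfair ht
  obtain ⟨x, hx⟩ : ∃ x, t v ∩ t w = {x} := by
    have := Finset.card_pos.2 (Finset.not_disjoint_iff_nonempty_inter.1 (hmeet v w))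
    exact Finset.card_eq_one.1 (by omega)
  have hxvw : x ∈ t v ∧ x ∈ t w := by rw [← mem_inter, hx, mem_singleton]
  obtain ⟨j₁, -, -, h₁⟩ := exists_absent_ne_ne hfair x v w
  obtain ⟨j₂, -, h₂₁, h₂⟩ := exists_absent_ne_ne hfair x v j₁
  obtain ⟨j₃, h₃₁, h₃₂, h₃⟩ := exists_absent_ne_ne hfair x j₁ j₂
  have hne : ∀ j, x ∉ t j → j ≠ v ∧ j ≠ w := by grind
  have hne₁ := hne j₁ h₁
  have hne₂ := hne j₂ h₂
  obtain ⟨c₁, hc₁⟩ := exists_mem_iff_notMem_of_inter_eq_singleton hfair ht hx h₁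
  obtain ⟨c₂, hc₂⟩ := exists_mem_iff_notMem_of_inter_eq_singleton hfair ht hx h₂
  obtain ⟨c₃, hc₃⟩ := exists_mem_iff_notMem_of_inter_eq_singleton hfair ht hx h₃
  obtain ⟨k, hk⟩ := exists_notMem_of_card_lt (S := {v, w, j₁, j₂, j₃})
    (card_le_five.trans_lt (by omega))
  simp only [mem_insert, mem_singleton, not_or] at hk
  have htk : t k = {c₁, c₂, c₃} := by
    apply eq_triple_of_mem (hcard k)
    · grind
    · grind
    · grind
    · rintro rfl; have := hc₁ j₁; have := hc₂ j₁; grind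
    · rintro rfl; have := hc₁ j₁; have := hc₃ j₁; grind
    · rintro rfl; have := hc₂ j₂; have := hc₃ j₂; grind
  apply hmeet k v
  simp [htk, hc₁, hc₂, hc₃]

theorem nicelyTwoColorable_of_three_fair (hcard : ∀ v, #(t v) = 3)
    (hfair : ∀ i, 3 ≤ #(absentees t i)) (hn : 6 ≤ Fintype.card ι) : NicelyTwoColorable t := by
  classical
  by_contra ht
  have hne : Nonempty ι := Fintype.card_pos_iff.1 (by omega)
  obtain ⟨S, hS, hsub, herase⟩ := exists_card_eq_four_of_two_le_card_inter hcard
    (two_le_card_inter_of_three_fair hcard hfair ht hn)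
    (fun i ↦ (exists_absent_ne_ne hfair i hne.some hne.some).imp fun _ hw ↦ hw.2.2)
  choose! g hg using herase
  have hempty : NoCommonElement t (S.image g) := by
    intro i
    by_cases hi : i ∈ S
    · exact ⟨g i, mem_image_of_mem g hi, by simp [hg i hi]⟩
    · obtain ⟨j, hj⟩ := card_pos.1 (by omega : 0 < #S)
      exact ⟨g j, mem_image_of_mem g hj, fun h ↦ hi (hsub _ h)⟩
  obtain ⟨i, hi⟩ := exists_forall_notMem_mem ht hempty
  obtain ⟨k, hk⟩ := exists_notMem_of_card_lt (S := S.image g)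
    (card_image_le.trans_lt (by omega))
  have hiS : i ∈ S := hsub k (hi k hk)
  obtain ⟨w, hwi, -, hw⟩ := exists_absent_ne_ne hfair i (g i) (g i)
  obtain ⟨j, hj, rfl⟩ := mem_image.1 (by_contra fun h ↦ hw (hi w h))
  rw [hg j hj, mem_erase] at hw
  grind

end ThreeFair

/-! ### An isolated absentee pair -/

/-- The absentees of `c` are exactly `u` and `v`, and every element of `t u` or `t v` has at least
two absentees besides `u` and `v` (one of them different from any prescribed `f`). -/
structure IsIsolatedPair {ι α : Type*} (t : ι → Finset α) (c : α) (u v : ι) : Prop where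
  ne : u ≠ v
  mem_iff : ∀ w, c ∈ t w ↔ w ≠ u ∧ w ≠ v
  exists_absent : ∀ x, x ∈ t u ∨ x ∈ t v → ∀ f, ∃ w, w ≠ u ∧ w ≠ v ∧ w ≠ f ∧ x ∉ t w

namespace IsIsolatedPair

variable {ι α : Type*} {t : ι → Finset α} {A : Finset ι} {c : α} {u v : ι}

theorem symm (h : IsIsolatedPair t c u v) : IsIsolatedPair t c v u where
  ne := h.ne.symm
  mem_iff w := by rw [h.mem_iff, and_comm]
  exists_absent x hx f := by
    obtain ⟨w, hwu, hwv, hwf, hxw⟩ := h.exists_absent x hx.symm f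
    exact ⟨w, hwv, hwu, hwf, hxw⟩

theorem mem_left_of_forall_exists_mem (h : IsIsolatedPair t c u v) (hcard : ∀ v, #(t v) = 3)
    (hmeet : ∀ f g, f ≠ u → f ≠ v → g ≠ u → g ≠ v → ∃ i ∈ t f, i ∈ t g ∧ i ∈ t u)
    (hA : NoCommonElement t A) (hvA : v ∉ A) {j : ι} (hju : j ≠ u) (hjv : j ≠ v) {i : α}
    (hij : i ∈ t j) (hic : i ≠ c) : i ∈ t u := by
  classical
  by_contra hiu
  have hcu : c ∉ t u := by simp [h.mem_iff]
  obtain ⟨q, -, -, htj⟩ := exists_eq_triple_of_mem (hcard j) ((h.mem_iff j).2 ⟨hju, hjv⟩) hij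
    hic.symm
  have hq : ∀ f, f ≠ u → f ≠ v → q ∈ t f ∧ q ∈ t u := by
    intro f hfu hfv
    obtain ⟨e, hej, hef, heu⟩ := hmeet j f hju hjv hfu hfv
    have hec : e ≠ c := ne_of_mem_of_not_mem heu hcu
    have hei : e ≠ i := ne_of_mem_of_not_mem heu hiu
    obtain rfl : e = q := by simpa [htj, hec, hei] using hej
    exact ⟨hef, heu⟩
  obtain ⟨w, hw, hqw⟩ := hA q
  have hwu : w ≠ u := by
    rintro rfl
    exact hqw (hq j hju hjv).2
  exact hqw (hq w hwu (ne_of_mem_of_not_mem hw hvA)).1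

theorem exists_mem_mem [Finite ι] (h : IsIsolatedPair t c u v) (ht : ¬ NicelyTwoColorable t) {w : ι}
    (hwu : w ≠ u) (hwv : w ≠ v) : ∃ i ∈ t w, i ∈ t u := by
  classical
  by_contra! hdisj
  have hempty : NoCommonElement t {u, w} := by
    intro i
    have hdisj_i := hdisj i
    grind
  obtain ⟨i, hi⟩ := exists_forall_notMem_mem ht hempty
  have hne := h.ne
  obtain ⟨k, hku, -, hkw, hik⟩ := h.exists_absent i (.inr (hi v (by grind))) w
  exact hik (hi k (by grind))

variable [Fintype ι]

theorem exists_triangle_of_forall_exists_mem [DecidableEq α] (h : IsIsolatedPair t c u v)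
    (hcard : ∀ v, #(t v) = 3) (hn : 2 < Fintype.card ι)
    (hmeet : ∀ f g, f ≠ u → f ≠ v → g ≠ u → g ≠ v → ∃ i ∈ t f, i ∈ t g ∧ i ∈ t u) :
    ∃ f g k x y z, t f = {c, x, y} ∧ t g = {c, y, z} ∧ t k = {c, x, z} ∧ t u = {x, y, z} := by
  classical
  have hmem := h.mem_iff
  obtain ⟨f, hf⟩ := exists_notMem_of_card_lt (S := {u, v}) (card_le_two.trans_lt hn)
  simp only [mem_insert, mem_singleton, not_or] at hf
  obtain ⟨hfu, hfv⟩ := hf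
  obtain ⟨x, hxf, -, hxu⟩ := hmeet f f hfu hfv hfu hfv
  obtain ⟨g, hgu, hgv, -, hxg⟩ := h.exists_absent x (.inl hxu) f
  obtain ⟨y, hyf, hyg, hyu⟩ := hmeet f g hfu hfv hgu hgv
  obtain ⟨k, hku, hkv, -, hyk⟩ := h.exists_absent y (.inl hyu) f
  obtain ⟨z, hzg, hzk, hzu⟩ := hmeet g k hgu hgv hku hkv
  have htf : t f = {c, x, y} := by
    apply eq_triple_of_mem (hcard f) <;> grind
  have hxk : x ∈ t k := by
    obtain ⟨i, hif, hik, hiu⟩ := hmeet f k hfu hfv hku hkv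
    grind
  refine ⟨f, g, k, x, y, z, htf, ?_, ?_, ?_⟩
  · apply eq_triple_of_mem (hcard g) <;> grind
  · apply eq_triple_of_mem (hcard k) <;> grind
  · apply eq_triple_of_mem (hcard u) <;> grind

theorem exists_forall_notMem_left (h : IsIsolatedPair t c u v) (ht : ¬ NicelyTwoColorable t)
    (hcard : ∀ v, #(t v) = 3) (hn : 6 ≤ Fintype.card ι) :
    ∃ f g, f ≠ u ∧ f ≠ v ∧ g ≠ u ∧ g ≠ v ∧ ∀ i ∈ t f, i ∈ t g → i ∉ t u := by
  classical
  by_contra! hmeet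
  have hne := h.ne
  have hmem := h.mem_iff
  obtain ⟨f, g, k, x, y, z, htf, htg, htk, htu⟩ :=
    h.exists_triangle_of_forall_exists_mem hcard (by omega) hmeet
  have hempty : NoCommonElement t {u, f, g, k} := by
    intro i
    grind
  obtain ⟨i, hi⟩ := exists_forall_notMem_mem ht hempty
  have hv : v ∉ ({u, f, g, k} : Finset ι) := by grind
  obtain ⟨j, hj⟩ := exists_notMem_of_card_lt (S := {v, u, f, g, k})
    (card_le_five.trans_lt (by omega))
  rw [mem_insert, not_or] at hj
  have hiu : i ∈ t u := h.mem_left_of_forall_exists_mem hcard hmeet hempty hv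
    (by grind) hj.1 (hi j hj.2) (by grind)
  have hlast : ∀ w, ∃ j, j ≠ u ∧ j ≠ w ∧ j ∈ ({u, f, g, k} : Finset ι) ∧ i ∉ t j := by
    intro w
    obtain ⟨j, hju, -, hjw, hij⟩ := h.exists_absent i (.inl hiu) w
    exact ⟨j, hju, hjw, by_contra fun hj ↦ hij (hi j hj), hij⟩
  have hlast_f := hlast f
  have hlast_g := hlast g
  have hlast_k := hlast k
  grind

end IsIsolatedPair

/-- The configuration reached from an isolated pair: `f` and `g` have no common element in `t u`,
the absentees of `y ∈ t v` lie among `u`, `f`, `g` and include `f` and `g`, and `z r` is the third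
element of a triple `t r` with `r ∉ {u, v, f, g}` (arbitrary for the four exceptional indices). -/
structure IsSplitPair {ι α : Type*} [DecidableEq ι] [DecidableEq α] (t : ι → Finset α) (c : α)
    (u v f g : ι) (y : α) (z : ι → α) : Prop where
  isolated : IsIsolatedPair t c u v
  ne : f ≠ g
  left_notMem : f ∉ ({u, v} : Finset ι)
  right_notMem : g ∉ ({u, v} : Finset ι)
  notMem_of_mem_of_mem : ∀ i ∈ t f, i ∈ t g → i ∉ t u
  notMem_left : y ∉ t f
  notMem_right : y ∉ t g
  mem : y ∈ t v
  eq_triple : ∀ r ∉ ({u, v, f, g} : Finset ι), t r = {c, y, z r}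

theorem IsIsolatedPair.exists_isSplitPair {ι α : Type*} [Fintype ι] [DecidableEq ι]
    [DecidableEq α] {t : ι → Finset α} {c : α} {u v : ι} (h : IsIsolatedPair t c u v)
    (ht : ¬ NicelyTwoColorable t) (hcard : ∀ v, #(t v) = 3) (hn : 6 ≤ Fintype.card ι) :
    ∃ f g y z, IsSplitPair t c u v f g y z := by
  obtain ⟨f, g, hfu, hfv, hgu, hgv, hfg⟩ := h.exists_forall_notMem_left ht hcard hn
  have hne := h.ne
  have hempty : NoCommonElement t {u, f, g} := by
    intro i
    have hfg_i := hfg i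
    grind
  obtain ⟨y, hy⟩ := exists_forall_notMem_mem ht hempty
  have hyv : y ∈ t v := hy v (by grind)
  have hyf : y ∉ t f := by
    obtain ⟨w, hwu, -, hwg, hyw⟩ := h.exists_absent y (.inr hyv) g
    obtain rfl : w = f := by grind
    exact hyw
  have hyg : y ∉ t g := by
    obtain ⟨w, hwu, -, hwf, hyw⟩ := h.exists_absent y (.inr hyv) f
    obtain rfl : w = g := by grind
    exact hyw
  have hyc : c ≠ y := by
    rintro rfl
    simp [h.mem_iff] at hyv
  obtain ⟨z, hz⟩ := exists_forall_notMem_eq_triple (S := {u, v, f, g}) hcard hyc fun r hr ↦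
    ⟨(h.mem_iff r).2 (by grind), hy r (by grind)⟩
  refine ⟨f, g, y, z, h, ?_, by grind, by grind, hfg, hyf, hyg, hyv, hz⟩
  rintro rfl
  obtain ⟨i, hif, hiu⟩ := h.exists_mem_mem ht hfu hfv
  exact hfg i hif hif hiu

namespace IsSplitPair

variable {ι α : Type*} [DecidableEq ι] [DecidableEq α] {t : ι → Finset α} {c y : α}
  {u v f g : ι} {z : ι → α}

theorem symm (h : IsSplitPair t c u v f g y z) : IsSplitPair t c u v g f y z where
  isolated := h.isolated
  ne := h.ne.symm
  left_notMem := h.right_notMem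
  right_notMem := h.left_notMem
  notMem_of_mem_of_mem i hg hf := h.notMem_of_mem_of_mem i hf hg
  notMem_left := h.notMem_right
  notMem_right := h.notMem_left
  mem := h.mem
  eq_triple r hr := h.eq_triple r (by grind)

theorem mem_left_or_mem_right (h : IsSplitPair t c u v f g y z) (ht : ¬ NicelyTwoColorable t)
    {r s : ι} (hr : r ∉ ({u, v, f, g} : Finset ι)) (hs : s ∉ ({u, v, f, g} : Finset ι))
    (hrs : r ≠ s) : (z r ∈ t f ∧ z r ∈ t u) ∨ (z s ∈ t g ∧ z s ∈ t v) := by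
  by_contra! hcon
  have hcu : c ∉ t u := by simp [h.isolated.mem_iff]
  have hcv : c ∉ t v := by simp [h.isolated.mem_iff]
  have htr := h.eq_triple r hr
  have hts := h.eq_triple s hs
  have huv := h.isolated.ne
  obtain ⟨-, hfg, hf, hg, -, hyf, hyg, -, -⟩ := h
  refine ht ⟨{u, f, r}, {v, g, s}, ?_, fun i ↦ ?_, fun i ↦ ?_⟩
  · rw [Finset.disjoint_left]
    grind
  · grind
  · grind

variable [Fintype ι]

theorem forall_mem_of_notMem (h : IsSplitPair t c u v f g y z) (ht : ¬ NicelyTwoColorable t)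
    (hn : 6 ≤ Fintype.card ι) {r : ι} (hr : r ∉ ({u, v, f, g} : Finset ι))
    (hzr : z r ∈ t g → z r ∉ t u) :
    ∀ s ∉ ({u, v, f, g} : Finset ι), z s ∈ t f ∧ z s ∈ t v := by
  have hkey : ∀ r s, r ∉ ({u, v, f, g} : Finset ι) → s ∉ ({u, v, f, g} : Finset ι) → r ≠ s →
      (z r ∈ t g → z r ∉ t u) → z s ∈ t f ∧ z s ∈ t v := by
    intro r s hr hs hrs hzr
    refine (h.symm.mem_left_or_mem_right ht ?_ ?_ hrs).resolve_left (by grind) <;> grind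
  obtain ⟨s₀, hs₀⟩ := exists_notMem_of_card_lt (S := {r, u, v, f, g})
    (card_le_five.trans_lt (by omega))
  intro s hs
  by_cases hsr : s = r
  · subst hsr
    have hzs₀ := hkey s s₀ hr (by grind) (by grind) hzr
    exact hkey s₀ s (by grind) hr (by grind) (h.notMem_of_mem_of_mem _ hzs₀.1)
  · exact hkey r s hr hs (Ne.symm hsr) hzr

theorem exists_ne_and_eq_triple (h : IsSplitPair t c u v f g y z) (hcard : ∀ v, #(t v) = 3)
    (hn : 4 < Fintype.card ι) (hz : ∀ r ∉ ({u, v, f, g} : Finset ι), z r ∈ t f ∧ z r ∈ t v) :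
    ∃ r ∉ ({u, v, f, g} : Finset ι), ∃ s ∉ ({u, v, f, g} : Finset ι), r ≠ s ∧
      t f = {c, z r, z s} ∧ t v = {y, z r, z s} := by
  obtain ⟨r, hr⟩ := exists_notMem_of_card_lt (S := {u, v, f, g}) (card_le_four.trans_lt hn)
  have hzr := hz r hr
  obtain ⟨s, hs, hzrs⟩ : ∃ s ∉ ({u, v, f, g} : Finset ι), z r ∉ t s := by
    obtain ⟨s, hsu, hsv, hsg, hzs⟩ := h.isolated.exists_absent (z r) (.inr hzr.2) g
    exact ⟨s, by grind, hzs⟩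
  have hzs := hz s hs
  have hne : z r ≠ z s := by
    intro heq
    simp [h.eq_triple s hs, heq] at hzrs
  have hcf : c ∈ t f := (h.isolated.mem_iff f).2 (by simpa using h.left_notMem)
  have hcv : c ∉ t v := by simp [h.isolated.mem_iff]
  refine ⟨r, hr, s, hs, fun heq ↦ hne (congrArg z heq), ?_, ?_⟩
  · exact eq_triple_of_mem (hcard f) hcf hzr.1 hzs.1 (ne_of_mem_of_not_mem hzr.2 hcv).symm
      (ne_of_mem_of_not_mem hzs.2 hcv).symm hne
  · exact eq_triple_of_mem (hcard v) h.mem hzr.2 hzs.2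
      (ne_of_mem_of_not_mem hzr.1 h.notMem_left).symm
      (ne_of_mem_of_not_mem hzs.1 h.notMem_left).symm hne

theorem nicelyTwoColorable_of_forall_mem (h : IsSplitPair t c u v f g y z)
    (hcard : ∀ v, #(t v) = 3) (hn : 4 < Fintype.card ι)
    (hz : ∀ r ∉ ({u, v, f, g} : Finset ι), z r ∈ t f ∧ z r ∈ t v) : NicelyTwoColorable t := by
  by_contra ht
  obtain ⟨r, hr, s, hs, hrs, htf, htv⟩ := h.exists_ne_and_eq_triple hcard hn hz
  have hf : f ≠ u ∧ f ≠ v := by simpa using h.left_notMem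
  have hg : g ≠ u ∧ g ≠ v := by simpa using h.right_notMem
  have hgv : z r ∈ t g ∨ z s ∈ t g := by
    obtain ⟨i, hig, hiv⟩ := h.isolated.symm.exists_mem_mem ht hg.2 hg.1
    have hiy : i ≠ y := ne_of_mem_of_not_mem hig h.notMem_right
    grind
  have hfu : z r ∈ t u ∨ z s ∈ t u := by
    obtain ⟨i, hif, hiu⟩ := h.isolated.exists_mem_mem ht hf.1 hf.2
    have hcu : c ∉ t u := by simp [h.isolated.mem_iff]
    grind
  have hr_split : z r ∈ t g → z r ∉ t u := h.notMem_of_mem_of_mem (z r) (hz r hr).1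
  have hs_split : z s ∈ t g → z s ∉ t u := h.notMem_of_mem_of_mem (z s) (hz s hs).1
  have hrs_cases := h.mem_left_or_mem_right ht hr hs hrs
  have hsr_cases := h.mem_left_or_mem_right ht hs hr hrs.symm
  tauto

end IsSplitPair

theorem IsIsolatedPair.nicelyTwoColorable {ι α : Type*} [Fintype ι] {t : ι → Finset α} {c : α}
    {u v : ι} (h : IsIsolatedPair t c u v) (hcard : ∀ v, #(t v) = 3)
    (hn : 6 ≤ Fintype.card ι) : NicelyTwoColorable t := by
  classical
  by_contra ht
  obtain ⟨f, g, y, z, hsplit⟩ := h.exists_isSplitPair ht hcard hn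
  obtain ⟨r, hr⟩ := exists_notMem_of_card_lt (S := {u, v, f, g})
    (card_le_four.trans_lt (by omega))
  by_cases hzr : z r ∈ t g → z r ∉ t u
  · exact ht (hsplit.nicelyTwoColorable_of_forall_mem hcard (by omega)
      (hsplit.forall_mem_of_notMem ht hn hr hzr))
  · have hr' : r ∉ ({u, v, g, f} : Finset ι) := by grind
    have hzr' : z r ∈ t f → z r ∉ t u := by
      intro hf
      exact hsplit.notMem_of_mem_of_mem _ hf (by grind)
    exact ht (hsplit.symm.nicelyTwoColorable_of_forall_mem hcard (by omega)
      (hsplit.symm.forall_mem_of_notMem ht hn hr' hzr'))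

/-! ### A path of absentee pairs -/

/-- The absentees of `c` are `u`, `v` and those of `x` are `v`, `f`, with `u`, `v`, `f` distinct.
Then `z j` is the third element of the triple `t j` for `j ∉ {u, v, f}` (arbitrary otherwise). -/
structure IsCriticalPath {ι α : Type*} [DecidableEq ι] [DecidableEq α] (t : ι → Finset α)
    (c x : α) (u v f : ι) (z : ι → α) : Prop where
  left_ne_mid : u ≠ v
  mid_ne_right : v ≠ f
  left_ne_right : u ≠ f
  mem_left_iff : ∀ w, c ∈ t w ↔ w ≠ u ∧ w ≠ v
  mem_right_iff : ∀ w, x ∈ t w ↔ w ≠ v ∧ w ≠ f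
  eq_triple : ∀ j ∉ ({u, v, f} : Finset ι), t j = {c, x, z j}

namespace IsCriticalPath

variable {ι α : Type*} [DecidableEq ι] [DecidableEq α] {t : ι → Finset α} {c x : α}
  {u v f : ι} {z : ι → α}

theorem left_notMem_left (h : IsCriticalPath t c x u v f z) : c ∉ t u := by
  simp [h.mem_left_iff]

theorem left_notMem_mid (h : IsCriticalPath t c x u v f z) : c ∉ t v := by
  simp [h.mem_left_iff]

theorem right_notMem_mid (h : IsCriticalPath t c x u v f z) : x ∉ t v := by
  simp [h.mem_right_iff]

theorem right_notMem_right (h : IsCriticalPath t c x u v f z) : x ∉ t f := by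
  simp [h.mem_right_iff]

theorem eq_triple_left (h : IsCriticalPath t c x u v f z) (hcard : ∀ v, #(t v) = 3)
    (hz : ∀ j ∉ ({u, v, f} : Finset ι), z j ∈ t u ∧ z j ∈ t f) {j k : ι}
    (hj : j ∉ ({u, v, f} : Finset ι)) (hk : k ∉ ({u, v, f} : Finset ι)) (hne : z j ≠ z k) :
    t u = {x, z j, z k} :=
  eq_triple_of_mem (hcard u) ((h.mem_right_iff u).2 ⟨h.left_ne_mid, h.left_ne_right⟩)
    (hz j hj).1 (hz k hk).1 (ne_of_mem_of_not_mem (hz j hj).2 h.right_notMem_right).symm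
    (ne_of_mem_of_not_mem (hz k hk).2 h.right_notMem_right).symm hne

theorem third_notMem (h : IsCriticalPath t c x u v f z)
    (hz : ∀ j ∉ ({u, v, f} : Finset ι), z j ∈ t u ∧ z j ∈ t f) {j k : ι}
    (hj : j ∉ ({u, v, f} : Finset ι)) (hk : k ∉ ({u, v, f} : Finset ι)) (hne : z j ≠ z k) :
    z j ∉ t k := by
  have hjc : z j ≠ c := ne_of_mem_of_not_mem (hz j hj).1 h.left_notMem_left
  have hjx : z j ≠ x := ne_of_mem_of_not_mem (hz j hj).2 h.right_notMem_right
  simp [h.eq_triple k hk, hjc, hjx, hne]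

theorem exists_forall_eq [Finite ι] (h : IsCriticalPath t c x u v f z)
    (ht : ¬ NicelyTwoColorable t) {j : ι} (hj : j ∉ ({u, v, f} : Finset ι))
    (hz : z j ∈ t u → z j ∉ t f) :
    ∃ i ∈ t v, ∀ k ∉ ({u, v, f} : Finset ι), k ≠ j → z k = i := by
  have hcu := h.left_notMem_left
  have hxf := h.right_notMem_right
  have huv := h.left_ne_mid
  have hvf := h.mid_ne_right
  have hempty : NoCommonElement t {u, f, j} := by
    intro i
    have htj := h.eq_triple j hj
    grind
  obtain ⟨i, hi⟩ := exists_forall_notMem_mem ht hempty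
  have hiv : i ∈ t v := hi v (by grind)
  refine ⟨i, hiv, fun k hk hkj ↦ ?_⟩
  have hik : i ∈ t k := hi k (by grind)
  have hic : i ≠ c := ne_of_mem_of_not_mem hiv h.left_notMem_mid
  have hix : i ≠ x := ne_of_mem_of_not_mem hiv h.right_notMem_mid
  rw [h.eq_triple k hk] at hik
  exact (by simpa [hic, hix] using hik : i = z k).symm

variable [Fintype ι]

theorem hasAbsenteeTriangle (h : IsCriticalPath t c x u v f z)
    (hfair : ∀ i, 2 ≤ #(absentees t i)) {i : α} (hi : ∀ k ∉ ({u, f} : Finset ι), i ∈ t k) :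
    HasAbsenteeTriangle t := by
  refine ⟨x, i, c, u, v, f, h.left_ne_mid, h.left_ne_right, h.mid_ne_right, ?_, ?_, ?_⟩
  · ext w
    simp only [mem_absentees, h.mem_right_iff, mem_insert, mem_singleton]
    tauto
  · refine eq_of_subset_of_card_le (fun w hw ↦ ?_) (card_le_two.trans (hfair i))
    exact by_contra fun hw' ↦ mem_absentees.1 hw (hi w hw')
  · ext w
    simp only [mem_absentees, h.mem_left_iff, mem_insert, mem_singleton]
    tauto

theorem hasAbsenteeTriangle_of_notMem (h : IsCriticalPath t c x u v f z)
    (hfair : ∀ i, 2 ≤ #(absentees t i)) (ht : ¬ NicelyTwoColorable t)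
    (hn : 6 ≤ Fintype.card ι) {j : ι} (hj : j ∉ ({u, v, f} : Finset ι))
    (hz : z j ∈ t u → z j ∉ t f) : HasAbsenteeTriangle t := by
  obtain ⟨i, hiv, hi⟩ := h.exists_forall_eq ht hj hz
  have hmem : ∀ k ∉ ({u, v, f} : Finset ι), z k ∈ t k := by
    intro k hk
    simp [h.eq_triple k hk]
  have hiuf : i ∈ t u → i ∉ t f := by
    intro hiu hif
    obtain ⟨w, hwj, hiw⟩ := exists_ne_absent hfair i j
    have hw : w ∉ ({u, v, f} : Finset ι) := by grind
    exact hiw (hi w hw hwj ▸ hmem w hw)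
  obtain ⟨k, hk⟩ := exists_notMem_of_card_lt (S := {j, u, v, f})
    (card_le_four.trans_lt (by omega))
  obtain ⟨l, hl⟩ := exists_notMem_of_card_lt (S := {k, j, u, v, f})
    (card_le_five.trans_lt (by omega))
  rw [mem_insert, not_or] at hk hl
  have hzk : z k = i := hi k hk.2 hk.1
  obtain ⟨i', -, hi'⟩ := h.exists_forall_eq ht hk.2 (hzk ▸ hiuf)
  have hzj : z j = i := by
    have hzl : z l = i := hi l (by grind) (by grind)
    rw [hi' j hj (Ne.symm hk.1), ← hzl, hi' l (by grind) hl.1]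
  refine h.hasAbsenteeTriangle hfair (i := i) fun w hw ↦ ?_
  by_cases hwv : w = v
  · exact hwv ▸ hiv
  · have hw' : w ∉ ({u, v, f} : Finset ι) := by grind
    have : z w = i := by grind
    exact this ▸ hmem w hw'

theorem nicelyTwoColorable_of_eq (h : IsCriticalPath t c x u v f z) (hcard : ∀ v, #(t v) = 3)
    (hfair : ∀ i, 2 ≤ #(absentees t i))
    (hz : ∀ j ∉ ({u, v, f} : Finset ι), z j ∈ t u ∧ z j ∈ t f) {j k l : ι}
    (hj : j ∉ ({u, v, f} : Finset ι)) (hk : k ∉ ({u, v, f} : Finset ι))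
    (hl : l ∉ ({u, v, f} : Finset ι)) (hjl : j ≠ l) (hzjl : z j = z l) (hzjk : z j ≠ z k) :
    NicelyTwoColorable t := by
  obtain ⟨w, hwk, hw⟩ := exists_ne_absent hfair (z j) k
  have hwj : w ≠ j ∧ w ≠ l := by
    constructor <;> rintro rfl
    · simp [h.eq_triple w hj] at hw
    · simp [h.eq_triple w hl, hzjl] at hw
  have hwuf : w ≠ u ∧ w ≠ f := by
    have := hz j hj
    constructor <;> rintro rfl <;> tauto
  refine ⟨{u, f, j, k}, {v, l, w}, ?_, fun i ↦ ?_, fun i ↦ ?_⟩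
  · have huv := h.left_ne_mid
    have hvf := h.mid_ne_right
    have hkl : k ≠ l := fun heq ↦ hzjk (hzjl.trans (congrArg z heq.symm))
    rw [Finset.disjoint_left]
    grind
  · by_contra! hi
    have hiu : i ∈ t u := hi u (by simp)
    simp only [h.eq_triple_left hcard hz hj hk hzjk, mem_insert, mem_singleton] at hiu
    obtain rfl | rfl | rfl := hiu
    · exact h.right_notMem_right (hi f (by simp))
    · exact h.third_notMem hz hj hk hzjk (hi k (by simp))
    · exact h.third_notMem hz hk hj hzjk.symm (hi j (by simp))
  · by_contra! hi
    have hil : i ∈ t l := hi l (by simp)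
    simp only [h.eq_triple l hl, ← hzjl, mem_insert, mem_singleton] at hil
    obtain rfl | rfl | rfl := hil
    · exact h.left_notMem_mid (hi v (by simp))
    · exact h.right_notMem_mid (hi v (by simp))
    · exact hw (hi w (by simp))

theorem nicelyTwoColorable_of_forall_mem (h : IsCriticalPath t c x u v f z)
    (hcard : ∀ v, #(t v) = 3) (hfair : ∀ i, 2 ≤ #(absentees t i)) (hn : 6 ≤ Fintype.card ι)
    (hz : ∀ j ∉ ({u, v, f} : Finset ι), z j ∈ t u ∧ z j ∈ t f) : NicelyTwoColorable t := by
  obtain ⟨j, hj⟩ := exists_notMem_of_card_lt (S := {u, v, f})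
    (card_le_three.trans_lt (by omega))
  obtain ⟨k, hkv, hzk⟩ := exists_ne_absent hfair (z j) v
  have hk : k ∉ ({u, v, f} : Finset ι) := by grind
  have hzjk : z j ≠ z k := by
    intro heq
    simp [h.eq_triple k hk, heq] at hzk
  obtain ⟨l, hl'⟩ := exists_notMem_of_card_lt (S := {j, k, u, v, f})
    (card_le_five.trans_lt (by omega))
  have hl : l ∉ ({u, v, f} : Finset ι) := by grind
  have hzl : z l = z j ∨ z l = z k := by
    have hlx : z l ≠ x := ne_of_mem_of_not_mem (hz l hl).2 h.right_notMem_right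
    simpa [h.eq_triple_left hcard hz hj hk hzjk, hlx] using (hz l hl).1
  obtain hzl | hzl := hzl
  · exact h.nicelyTwoColorable_of_eq hcard hfair hz hj hk hl (by grind) hzl.symm hzjk
  · exact h.nicelyTwoColorable_of_eq hcard hfair hz hk hj hl (by grind) hzl.symm hzjk.symm

end IsCriticalPath

/-! ### The theorem for families -/

section Families

variable {ι α : Type*} [Fintype ι] [DecidableEq ι] [DecidableEq α] {t : ι → Finset α}

theorem nicelyTwoColorable_of_absentees_eq {c x : α} {u v f : ι} (huv : u ≠ v) (hvf : v ≠ f)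
    (huf : u ≠ f) (hc : absentees t c = {u, v}) (hx : absentees t x = {v, f})
    (hcard : ∀ v, #(t v) = 3) (hfair : ∀ i, 2 ≤ #(absentees t i)) (hn : 6 ≤ Fintype.card ι)
    (htri : ¬ HasAbsenteeTriangle t) : NicelyTwoColorable t := by
  have hmem_c := mem_iff_of_absentees_eq hc
  have hmem_x := mem_iff_of_absentees_eq hx
  have hcx : c ≠ x := by
    rintro rfl
    simpa [huv, huf] using (hmem_c u).symm.trans (hmem_x u)
  obtain ⟨z, hz⟩ := exists_forall_notMem_eq_triple (S := {u, v, f}) hcard hcx fun j hj ↦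
    ⟨(hmem_c j).2 (by grind), (hmem_x j).2 (by grind)⟩
  have h : IsCriticalPath t c x u v f z := ⟨huv, hvf, huf, hmem_c, hmem_x, hz⟩
  by_cases hD : ∀ j ∉ ({u, v, f} : Finset ι), z j ∈ t u ∧ z j ∈ t f
  · exact h.nicelyTwoColorable_of_forall_mem hcard hfair hn hD
  · push Not at hD
    obtain ⟨j, hj, hzj⟩ := hD
    by_contra ht
    exact htri (h.hasAbsenteeTriangle_of_notMem hfair ht hn hj hzj)

theorem absentees_eq_pair_of_forall_mem {x : α} {u v f : ι} (hfair : ∀ i, 2 ≤ #(absentees t i))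
    (hxu : x ∈ t u) (hx : ∀ w, w ≠ u → w ≠ v → w ≠ f → x ∈ t w) :
    absentees t x = {v, f} ∧ v ≠ f ∧ u ≠ f := by
  have heq : absentees t x = {v, f} :=
    eq_of_subset_of_card_le (by grind) (card_le_two.trans (hfair x))
  have hxu' := (mem_iff_of_absentees_eq heq u).1 hxu
  refine ⟨heq, ?_, hxu'.2⟩
  rintro rfl
  simpa [heq] using hfair x

theorem nicelyTwoColorable_of_not_hasAbsenteeTriangle (hcard : ∀ v, #(t v) = 3)
    (hn : 6 ≤ Fintype.card ι) (hfair : ∀ i, 2 ≤ #(absentees t i))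
    (htri : ¬ HasAbsenteeTriangle t) : NicelyTwoColorable t := by
  by_cases hthree : ∀ i, 3 ≤ #(absentees t i)
  · exact nicelyTwoColorable_of_three_fair hcard hthree hn
  push Not at hthree
  obtain ⟨c, hlt⟩ := hthree
  obtain ⟨u, v, huv, hc⟩ := card_eq_two.1 (le_antisymm (Nat.le_of_lt_succ hlt) (hfair c))
  by_cases hiso : ∀ x, x ∈ t u ∨ x ∈ t v → ∀ f, ∃ w, w ≠ u ∧ w ≠ v ∧ w ≠ f ∧ x ∉ t w
  · exact IsIsolatedPair.nicelyTwoColorable ⟨huv, mem_iff_of_absentees_eq hc, hiso⟩ hcard hn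
  push Not at hiso
  obtain ⟨x, hxu | hxv, f, hx⟩ := hiso
  · obtain ⟨hxvf, hvf, huf⟩ := absentees_eq_pair_of_forall_mem hfair hxu hx
    exact nicelyTwoColorable_of_absentees_eq huv hvf huf hc hxvf hcard hfair hn htri
  · obtain ⟨hxuf, huf, hvf⟩ := absentees_eq_pair_of_forall_mem hfair hxv
      fun w hwv hwu ↦ hx w hwu hwv
    exact nicelyTwoColorable_of_absentees_eq huv.symm huf hvf (by rw [hc, pair_comm]) hxuf
      hcard hfair hn htri

theorem nice_two_coloring_iff_fair_nonspecial_general (hcard : ∀ v, #(t v) = 3)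
    (hn : 6 ≤ Fintype.card ι) :
    NicelyTwoColorable t ↔ (∀ i, 2 ≤ #(absentees t i)) ∧ ¬ HasAbsenteeTriangle t :=
  ⟨fun h ↦ ⟨h.two_le_card_absentees, h.not_hasAbsenteeTriangle⟩,
    fun h ↦ nicelyTwoColorable_of_not_hasAbsenteeTriangle hcard hn h.1 h.2⟩

end Families

/-! ### From multisets to families -/

section Multisets

theorem exists_le_map_eq_of_le_map {ι β : Type*} {f : ι → β} {s : Multiset ι} {m : Multiset β}
    (h : m ≤ s.map f) : ∃ s' ≤ s, s'.map f = m := by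
  induction s using Quotient.inductionOn with | _ l
  induction m using Quotient.inductionOn with | _ l'
  obtain ⟨l₀, hperm, hsub⟩ := h
  obtain ⟨l₁, hl₁, rfl⟩ := List.sublist_map_iff.1 hsub
  exact ⟨l₁, hl₁.subperm, Quotient.sound hperm⟩

variable {ι : Type*} [Fintype ι]

theorem map_val_add_map_val_compl {β : Type*} [DecidableEq ι] (t : ι → β) (A : Finset ι) :
    A.val.map t + Aᶜ.val.map t = univ.val.map t := by
  rw [← Multiset.map_add, compl_eq_univ_sdiff, sdiff_val,
    add_tsub_cancel_of_le (val_le_iff.2 (subset_univ A))]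

theorem exists_map_val_eq_of_add_eq {β : Type*} [DecidableEq ι] {t : ι → β} {m m' : Multiset β}
    (h : m + m' = univ.val.map t) : ∃ A : Finset ι, A.val.map t = m ∧ Aᶜ.val.map t = m' := by
  obtain ⟨s, hs, rfl⟩ := exists_le_map_eq_of_le_map (h ▸ Multiset.le_add_right m m')
  let A : Finset ι := ⟨s, Multiset.nodup_of_le hs univ.nodup⟩
  exact ⟨A, rfl, add_left_cancel ((map_val_add_map_val_compl t A).trans h.symm)⟩

variable {t : ι → Finset ℕ+}

theorem cFair_map_univ_iff {k : ℕ} (hk : k ≤ Fintype.card ι) :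
    CFair k (univ.val.map t) ↔ ∀ i, k ≤ #(absentees t i) := by
  simp only [CFair, ← Multiset.countP_eq_card_filter, ← card_absentees_eq_countP]
  refine ⟨fun h i ↦ ?_, fun h i _ ↦ h i⟩
  by_cases hi : ∃ s ∈ univ.val.map t, i ∈ s
  · exact h i hi
  · have : absentees t i = univ := by
      ext v
      simpa using fun hv ↦ hi ⟨t v, by simp, hv⟩
    rwa [this, card_univ]

theorem exists_niceColoring_map_univ_iff (hcard : ∀ v, #(t v) = 3) (hn : 0 < Fintype.card ι) :
    (∃ f, NiceColoring 2 (univ.val.map t) f) ↔ NicelyTwoColorable t := by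
  classical
  constructor
  · rintro ⟨f, hsum, hnice⟩
    rw [Fin.sum_univ_two] at hsum
    obtain ⟨A, hA, hA'⟩ := exists_map_val_eq_of_add_eq hsum
    have hclass : ∀ (j : Fin 2) (B : Finset ι), B.val.map t = f j → NoCommonElement t B := by
      intro j B hB i
      by_cases hi : ∃ v, i ∈ t v
      · simpa [← hB] using hnice j i (by simpa using hi)
      · obtain ⟨v⟩ := Fintype.card_pos_iff.1 hn
        obtain ⟨i₀, hi₀⟩ := card_pos.1 (by rw [hcard v]; norm_num)
        obtain ⟨w, hw, -⟩ : ∃ w ∈ B, i₀ ∉ t w := by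
          simpa [← hB] using hnice j i₀ ⟨t v, by simp, hi₀⟩
        exact ⟨w, hw, fun h ↦ hi ⟨w, h⟩⟩
    exact ⟨A, Aᶜ, disjoint_compl_right, hclass 0 A hA, hclass 1 Aᶜ hA'⟩
  · rintro ⟨A, B, hAB, hA, hB⟩
    refine ⟨![A.val.map t, Aᶜ.val.map t], by simp [map_val_add_map_val_compl], fun j i _ ↦ ?_⟩
    fin_cases j
    · simpa using hA i
    · obtain ⟨v, hvB, hv⟩ := hB i
      exact ⟨t v, Multiset.mem_map_of_mem t
        (mem_compl.2 (Finset.disjoint_right.1 hAB hvB)), hv⟩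

variable [DecidableEq ι]

theorem HasAbsenteeTriangle.special (h : HasAbsenteeTriangle t) (hcard : ∀ v, #(t v) = 3) :
    Special (univ.val.map t) := by
  obtain ⟨a, b, c, p, q, r, hpq, hpr, hqr, ha, hb, hc⟩ := h
  replace ha := mem_iff_of_absentees_eq ha
  replace hb := mem_iff_of_absentees_eq hb
  replace hc := mem_iff_of_absentees_eq hc
  have hp : a ∈ t p ∧ b ∉ t p ∧ c ∉ t p := by simp [ha, hb, hc, hpq, hpr]
  have hq : a ∉ t q ∧ b ∈ t q ∧ c ∉ t q := by simp [ha, hb, hc, hpq.symm, hqr]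
  have hr : a ∉ t r ∧ b ∉ t r ∧ c ∈ t r := by simp [ha, hb, hc, hpr.symm, hqr.symm]
  have hab : a ≠ b := by grind
  have hac : a ≠ c := by grind
  have hbc : b ≠ c := by grind
  refine ⟨a, b, c, hab, hac, hbc, t p, t q, t r, ?_, by tauto⟩
  have hpqr : ({p, q, r} : Finset ι).val.map t = {t p, t q, t r} := by
    rw [insert_val_of_notMem (by simp [hpq, hpr]), insert_val_of_notMem (by simp [hqr])]
    simp
  have hrest : ({p, q, r} : Finset ι)ᶜ.val.map t
      = Multiset.replicate (Multiset.card (univ.val.map t) - 3) {a, b, c} := by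
    refine Multiset.eq_replicate.2 ⟨?_, fun s hs ↦ ?_⟩
    · have : #{p, q, r} = 3 := card_eq_three.2 ⟨p, q, r, hpq, hpr, hqr, rfl⟩
      rw [Multiset.card_map, Multiset.card_map, card_val, card_val, card_compl, this, card_univ]
    · obtain ⟨k, hk, rfl⟩ := Multiset.mem_map.1 hs
      simp only [mem_val, mem_compl, mem_insert, mem_singleton, not_or] at hk
      apply eq_triple_of_mem (hcard k) <;> grind
  rw [← hrest, ← hpqr, add_comm, map_val_add_map_val_compl]

theorem Special.hasAbsenteeTriangle (h : Special (univ.val.map t)) : HasAbsenteeTriangle t := by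
  obtain ⟨a, b, c, -, -, -, s₁, s₂, s₃, hT, ha₁, hb₁, hc₁, ha₂, hb₂, hc₂, ha₃, hb₃, hc₃⟩ := h
  have hindex : ∀ s ∈ ({s₁, s₂, s₃} : Multiset (Finset ℕ+)), ∃ v, t v = s := by
    intro s hs
    have : s ∈ univ.val.map t := hT ▸ Multiset.mem_add.2 (.inr hs)
    simpa using this
  obtain ⟨p, rfl⟩ := hindex s₁ (by simp)
  obtain ⟨q, rfl⟩ := hindex s₂ (by simp)
  obtain ⟨r, rfl⟩ := hindex s₃ (by simp)
  have hpq : p ≠ q := by grind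
  have hpr : p ≠ r := by grind
  have hqr : q ≠ r := by grind
  have hcount : ∀ e ∈ ({a, b, c} : Finset ℕ+),
      #(absentees t e) = Multiset.countP (e ∉ ·) {t p, t q, t r} := by
    intro e he
    rw [card_absentees_eq_countP, hT, Multiset.countP_add, Multiset.countP_eq_zero.2, zero_add]
    intro s hs
    simpa only [Multiset.eq_of_mem_replicate hs, not_not]
  refine ⟨a, b, c, p, q, r, hpq, hpr, hqr, absentees_eq_pair_of_card_le_two ha₂ ha₃ hqr ?_,
    absentees_eq_pair_of_card_le_two hb₁ hb₃ hpr ?_,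
    absentees_eq_pair_of_card_le_two hc₁ hc₂ hpq ?_⟩
  · simp [hcount, Multiset.insert_eq_cons, ← Multiset.cons_zero, ha₁, ha₂, ha₃]
  · simp [hcount, Multiset.insert_eq_cons, ← Multiset.cons_zero, hb₁, hb₂, hb₃]
  · simp [hcount, Multiset.insert_eq_cons, ← Multiset.cons_zero, hc₁, hc₂, hc₃]

theorem special_map_univ_iff (hcard : ∀ v, #(t v) = 3) :
    Special (univ.val.map t) ↔ HasAbsenteeTriangle t :=
  ⟨Special.hasAbsenteeTriangle, fun h ↦ h.special hcard⟩

end Multisets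

/-- A finite multiset of `n ≥ 6` triples admits a nice two-coloring if and only if it
is fair (2-fair) and non-special. -/
theorem nice_two_coloring_iff_fair_nonspecial
    (T : Multiset (Finset ℕ+)) (hT : ∀ t ∈ T, t.card = 3)
    (hn : 6 ≤ Multiset.card T) :
    (∃ f : Fin 2 → Multiset (Finset ℕ+), NiceColoring 2 T f) ↔
      (CFair 2 T ∧ ¬ Special T) := by
  obtain ⟨ι, _, _, t, rfl⟩ : ∃ (ι : Type) (_ : Fintype ι) (_ : DecidableEq ι)
      (t : ι → Finset ℕ+), univ.val.map t = T :=
    ⟨T, inferInstance, Classical.decEq T, (↑), T.map_univ_coe⟩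
  have hcard : ∀ v, #(t v) = 3 := by simpa using hT
  have hn' : 6 ≤ Fintype.card ι := by simpa using hn
  rw [exists_niceColoring_map_univ_iff hcard (by omega), cFair_map_univ_iff (by omega),
    special_map_univ_iff hcard]
  exact nice_two_coloring_iff_fair_nonspecial_general hcard hn'
end

section
/- A finite multiset of n ≥ 6 triples admits a nice partial 2-coloring that colors at most 4 triples with each of the two colors if and only if the multiset is fair and non-special. -/
/-- `f` is a *nice partial `c`-coloring* of the multiset `T` of tuples: the color
classes `f j` form disjoint submultisets of `T` (some tuples may stay uncolored), and
for each color `j` and every element `i` appearing in some tuple of `T` there is a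
tuple of color `j` not containing `i`. -/
def NicePartialColoring (c : ℕ) (T : Multiset (Finset ℕ+))
    (f : Fin c → Multiset (Finset ℕ+)) : Prop :=
  (∑ j, f j) ≤ T ∧
  ∀ j : Fin c, ∀ i : ℕ+, (∃ t ∈ T, i ∈ t) → ∃ t ∈ f j, i ∉ t

/-!
Index the sets by `ι` and ask for a splitting of `ι` into two classes, neither with a common
element; each class can then be thinned out to one set together with one set missing each of its
elements, at most four in all.

If every element is missed at least three times, a splitting exists: without one, any two sets would
meet, then any three; now put a triple `{x, y, z}` and a set missing each of `x`, `y`, `z` into one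
class: an element common to the other class then lies in every set but `{x, y, z}`.

If some `a` is missed by exactly two sets `P` and `Q`, a splitting has to separate them, and the
other sets with `a` removed form a multigraph whose edges are to be distributed over `P` and `Q`. If
no distribution works, there are two disjoint edges (the alternatives are a star and a triangle with
a repeated edge, and both can be distributed), and then all edges but one are equal to some `{i, k}`
with `i ∈ Q` and `k ∈ P`: the family is special.

A special family has no nice coloring because each color needs two sets other than `{a, b, c}`, and
there are only three of those.
-/

section SmallSets

variable {α : Type*} [DecidableEq α] {s : Finset α} {x y z : α}

theorem eq_pair_of_mem_of_card_le_two (hs : s.card ≤ 2) (hx : x ∈ s) (hy : y ∈ s)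
    (hxy : x ≠ y) : s = {x, y} :=
  (Finset.eq_of_subset_of_card_le (by simp [Finset.insert_subset_iff, hx, hy])
    (by rwa [Finset.card_pair hxy])).symm

theorem eq_triple_of_mem_of_card_le_three (hs : s.card ≤ 3) (hx : x ∈ s) (hy : y ∈ s)
    (hz : z ∈ s) (hxy : x ≠ y) (hxz : x ≠ z) (hyz : y ≠ z) : s = {x, y, z} :=
  (Finset.eq_of_subset_of_card_le (by simp [Finset.insert_subset_iff, hx, hy, hz])
    (by rwa [Finset.card_eq_three.2 ⟨x, y, z, hxy, hxz, hyz, rfl⟩])).symm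

end SmallSets

section Families

variable {ι α : Type*} {t : ι → Finset α}

/-- The indices can be split into two classes, each of which has no element common to all of its
sets. This is a nice partial 2-coloring of an indexed family, without a bound on the classes. -/
def Splittable (t : ι → Finset α) : Prop :=
  ∃ S : Set ι, ∀ x, (∃ j ∈ S, x ∉ t j) ∧ ∃ j ∉ S, x ∉ t j

/-- Every element is absent from at least `c` of the sets `t j`: no exclusion of fewer than `c`
indices exhausts the sets that miss it. This is the indexed form of `CFair`, except that it also
concerns elements that appear in no set of the family. -/
def FairFamily (c : ℕ) (t : ι → Finset α) : Prop :=
  ∀ x, ∀ K : Finset ι, K.card < c → ∃ j ∉ K, x ∉ t j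

theorem FairFamily.exists_notMem_ne (hf : FairFamily 2 t) (x : α) (k : ι) :
    ∃ j, j ≠ k ∧ x ∉ t j := by
  simpa using hf x {k} (by simp)

theorem FairFamily.exists_notMem_ne_ne (hf : FairFamily 3 t) (x : α) (k l : ι) :
    ∃ j, j ≠ k ∧ j ≠ l ∧ x ∉ t j := by
  classical
  simpa [and_assoc] using hf x {k, l} (Finset.card_le_two.trans_lt (by simp))

theorem exists_forall_mem_of_not_splittable (h : ¬ Splittable t) (S : Set ι) :
    ∃ x, (∀ j ∈ S, x ∈ t j) ∨ ∀ j ∉ S, x ∈ t j := by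
  by_contra! hS
  exact h ⟨S, hS⟩

theorem exists_forall_notMem_mem_of_not_splittable (h : ¬ Splittable t) {S : Set ι}
    (hS : ∀ x, ∃ j ∈ S, x ∉ t j) : ∃ x, ∀ j ∉ S, x ∈ t j := by
  obtain ⟨x, hx | hx⟩ := exists_forall_mem_of_not_splittable h S
  · obtain ⟨j, hj, hxj⟩ := hS x
    exact absurd (hx j hj) hxj
  · exact ⟨x, hx⟩

theorem exists_mem_mem_of_not_splittable (hf : FairFamily 3 t) (h : ¬ Splittable t) (p q : ι) :
    ∃ x ∈ t p, x ∈ t q := by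
  obtain ⟨x, hx | hx⟩ := exists_forall_mem_of_not_splittable h {p, q}
  · exact ⟨x, hx p (by simp), hx q (by simp)⟩
  · obtain ⟨j, hjp, hjq, hj⟩ := hf.exists_notMem_ne_ne x p q
    exact absurd (hx j (by simp [hjp, hjq])) hj

/-- An element common to all sets outside `{p, q, r}` is missed by all three, as it is missed
three times. -/
theorem exists_mem_iff_of_not_splittable (hf : FairFamily 3 t) (h : ¬ Splittable t) {p q r : ι}
    (hpqr : ∀ x ∈ t p, x ∈ t q → x ∉ t r) :
    ∃ x, ∀ j, x ∈ t j ↔ j ≠ p ∧ j ≠ q ∧ j ≠ r := by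
  obtain ⟨x, hx⟩ : ∃ x, ∀ j ∉ ({p, q, r} : Set ι), x ∈ t j :=
    exists_forall_notMem_mem_of_not_splittable h fun x => by
      simp only [Set.mem_insert_iff, Set.mem_singleton_iff, exists_eq_or_imp, exists_eq_left]
      grind
  have hp := hf.exists_notMem_ne_ne x q r
  have hq := hf.exists_notMem_ne_ne x p r
  have hr := hf.exists_notMem_ne_ne x p q
  exact ⟨x, fun j => by grind⟩

/-- The set `t r` would have four elements: one shared with each of `t p` and `t q`, and, for two
sets `t b` missing `y`, the element that is missed exactly by `t p`, `t q` and `t b`. -/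
theorem false_of_inter_eq_singleton (ht : ∀ j, (t j).card ≤ 3) (hf : FairFamily 3 t)
    (h : ¬ Splittable t) {p q r : ι} {y : α} (hpqr : ∀ x ∈ t p, x ∈ t q → x ∉ t r)
    (hp : y ∈ t p) (hq : y ∈ t q) (hy : ∀ x ∈ t p, x ∈ t q → x = y) : False := by
  classical
  have exists_mem_iff {b : ι} (hb : y ∉ t b) : ∃ x, ∀ j, x ∈ t j ↔ j ≠ p ∧ j ≠ q ∧ j ≠ b :=
    exists_mem_iff_of_not_splittable hf h fun x hxp hxq => hy x hxp hxq ▸ hb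
  obtain ⟨b, hbr, -, hb⟩ := hf.exists_notMem_ne_ne y r r
  obtain ⟨b', hb'r, hb'b, hb'⟩ := hf.exists_notMem_ne_ne y r b
  obtain ⟨u, hu⟩ := exists_mem_iff hb
  obtain ⟨v, hv⟩ := exists_mem_iff hb'
  obtain ⟨x₁, hx₁p, hx₁r⟩ := exists_mem_mem_of_not_splittable hf h p r
  obtain ⟨x₂, hx₂q, hx₂r⟩ := exists_mem_mem_of_not_splittable hf h q r
  have hur : u ∈ t r := by grind
  have hvr : v ∈ t r := by grind
  have hr := eq_triple_of_mem_of_card_le_three (ht r) hur hvr hx₁r (by grind) (by grind) (by grind)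
  grind

theorem exists_mem_mem_mem_of_not_splittable (ht : ∀ j, (t j).card ≤ 3) (hf : FairFamily 3 t)
    (h : ¬ Splittable t) (p q r : ι) : ∃ x ∈ t p, x ∈ t q ∧ x ∈ t r := by
  classical
  by_contra! hpqr
  obtain ⟨x, hxp, hxq⟩ := exists_mem_mem_of_not_splittable hf h p q
  by_cases hx : ∀ y ∈ t p, y ∈ t q → y = x
  · exact false_of_inter_eq_singleton ht hf h hpqr hxp hxq hx
  push Not at hx
  obtain ⟨y, hyp, hyq, hyx⟩ := hx
  obtain ⟨z, hzp, hzr⟩ := exists_mem_mem_of_not_splittable hf h p r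
  have hp : t p = {x, y, z} :=
    eq_triple_of_mem_of_card_le_three (ht p) hxp hyp hzp hyx.symm (by grind) (by grind)
  exact false_of_inter_eq_singleton (q := r) (r := q) ht hf h (by grind) hzp hzr (by grind)

theorem exists_triple_of_forall_exists_mem_mem_mem [DecidableEq α] (ht : ∀ j, (t j).card ≤ 3)
    (hf : ∀ x, ∃ j, x ∉ t j) (hinter : ∀ p q r, ∃ x ∈ t p, x ∈ t q ∧ x ∈ t r) (o : ι) :
    ∃ x y z, x ≠ y ∧ x ≠ z ∧ y ≠ z ∧ t o = {x, y, z} ∧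
      ∀ j, (x ∈ t j ∨ y ∈ t j) ∧ (x ∈ t j ∨ z ∈ t j) ∧ (y ∈ t j ∨ z ∈ t j) := by
  choose m hm using hf
  obtain ⟨x, hxo, -⟩ := hinter o o o
  obtain ⟨y, hyo, hyx, -⟩ := hinter o (m x) o
  obtain ⟨z, hzo, hzx, hzy⟩ := hinter o (m x) (m y)
  have hxy : x ≠ y := by grind
  have hxz : x ≠ z := by grind
  have hyz : y ≠ z := by grind
  have ho := eq_triple_of_mem_of_card_le_three (ht o) hxo hyo hzo hxy hxz hyz
  refine ⟨x, y, z, hxy, hxz, hyz, ho, fun j => ?_⟩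
  have := hinter o j (m x)
  have := hinter o j (m y)
  have := hinter o j (m z)
  grind

/-- Take a set `{x, y, z}` and one further set missing each of its elements as the first class. An
element `w` common to all other sets then turns out to lie in these further sets as well. -/
theorem splittable_of_forall_exists_mem_mem_mem (ht : ∀ j, (t j).card ≤ 3)
    (hf : FairFamily 3 t) (hinter : ∀ p q r, ∃ x ∈ t p, x ∈ t q ∧ x ∈ t r) : Splittable t := by
  classical
  by_contra h
  obtain ⟨x₀, -⟩ := exists_forall_mem_of_not_splittable h ∅
  obtain ⟨o, -⟩ := hf x₀ ∅ (by simp)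
  obtain ⟨x, y, z, hxy, hxz, hyz, ho, hpair⟩ := exists_triple_of_forall_exists_mem_mem_mem ht
    (fun x => by simpa using hf x ∅ (by simp)) hinter o
  obtain ⟨b, -, -, hb⟩ := hf.exists_notMem_ne_ne x o o
  obtain ⟨c, -, -, hc⟩ := hf.exists_notMem_ne_ne y o o
  obtain ⟨d, -, -, hd⟩ := hf.exists_notMem_ne_ne z o o
  obtain ⟨b', -, hbb', hb'⟩ := hf.exists_notMem_ne_ne x o b
  obtain ⟨c', -, hcc', hc'⟩ := hf.exists_notMem_ne_ne y o c
  obtain ⟨d', -, hdd', hd'⟩ := hf.exists_notMem_ne_ne z o d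
  obtain ⟨w, hw⟩ : ∃ w, ∀ j ∉ ({o, b, c, d} : Set ι), w ∈ t j :=
    exists_forall_notMem_mem_of_not_splittable h fun v => by
      simp only [Set.mem_insert_iff, Set.mem_singleton_iff, exists_eq_or_imp, exists_eq_left]
      grind
  have hwb' : w ∈ t b' := hw b' (by grind)
  have hwc' : w ∈ t c' := hw c' (by grind)
  have hwd' : w ∈ t d' := hw d' (by grind)
  have hb'_eq : t b' = {y, z, w} :=
    eq_triple_of_mem_of_card_le_three (ht b') (by grind) (by grind) hwb' hyz (by grind) (by grind)
  have hc'_eq : t c' = {x, z, w} :=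
    eq_triple_of_mem_of_card_le_three (ht c') (by grind) (by grind) hwc' hxz (by grind) (by grind)
  have hd'_eq : t d' = {x, y, w} :=
    eq_triple_of_mem_of_card_le_three (ht d') (by grind) (by grind) hwd' hxy (by grind) (by grind)
  have hwb : w ∈ t b := by have := hinter b c' d'; grind
  have hwc : w ∈ t c := by have := hinter c b' d'; grind
  have hwd : w ∈ t d := by have := hinter d b' c'; grind
  obtain ⟨j, hjo, -, hj⟩ := hf.exists_notMem_ne_ne w o o
  exact hj (hw j (by grind))

theorem splittable_of_fairFamily_three (ht : ∀ j, (t j).card ≤ 3) (hf : FairFamily 3 t) :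
    Splittable t := by
  by_contra h
  exact h (splittable_of_forall_exists_mem_mem_mem ht hf
    (exists_mem_mem_mem_of_not_splittable ht hf h))

end Families

/-- What remains of a non-splittable family around an element missed only by two of its sets, `P`
and `Q`: the other sets, with that element removed, form a multigraph with edges `e j`, and however
the edges are distributed over `P` and `Q`, some vertex is common to one of the two classes. -/
structure LinkObstruction {κ α : Type*} (e : κ → Finset α) (P Q : Finset α) : Prop where
  card_edge_le : ∀ j, (e j).card ≤ 2
  card_left_le : P.card ≤ 3
  card_right_le : Q.card ≤ 3
  exists_notMem_left : ∀ x ∈ P, ∃ j, x ∉ e j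
  exists_notMem_right : ∀ x ∈ Q, ∃ j, x ∉ e j
  exists_notMem_ne : ∀ x ∈ P, x ∈ Q → ∀ k, ∃ j, j ≠ k ∧ x ∉ e j
  common_vertex : ∀ S : Set κ, (∃ x ∈ P, ∀ j ∈ S, x ∈ e j) ∨ ∃ x ∈ Q, ∀ j ∉ S, x ∈ e j
  exists_edge_ne : ∀ j₁ j₂ j₃ : κ, ∃ j, j ≠ j₁ ∧ j ≠ j₂ ∧ j ≠ j₃

namespace LinkObstruction

variable {κ α : Type*} {e : κ → Finset α} {P Q : Finset α}

theorem symm (h : LinkObstruction e P Q) : LinkObstruction e Q P where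
  card_edge_le := h.card_edge_le
  card_left_le := h.card_right_le
  card_right_le := h.card_left_le
  exists_notMem_left := h.exists_notMem_right
  exists_notMem_right := h.exists_notMem_left
  exists_notMem_ne x hQ hP := h.exists_notMem_ne x hP hQ
  common_vertex S := by simpa using (h.common_vertex Sᶜ).symm
  exists_edge_ne := h.exists_edge_ne

theorem exists_mem_of_disjoint (h : LinkObstruction e P Q) {S S' : Set κ}
    (hS : Disjoint S S') : (∃ x ∈ P, ∀ j ∈ S, x ∈ e j) ∨ ∃ x ∈ Q, ∀ j ∈ S', x ∈ e j :=
  (h.common_vertex S).imp_right fun ⟨x, hx, hxe⟩ =>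
    ⟨x, hx, fun j hj => hxe j (hS.notMem_of_mem_right hj)⟩

theorem exists_mem_of_pairs (h : LinkObstruction e P Q) {f f' g g' : κ} (hfg : f ≠ g)
    (hfg' : f ≠ g') (hf'g : f' ≠ g) (hf'g' : f' ≠ g') :
    (∃ x ∈ P, x ∈ e f ∧ x ∈ e f') ∨ ∃ x ∈ Q, x ∈ e g ∧ x ∈ e g' := by
  simpa using h.exists_mem_of_disjoint (S := {f, f'}) (S' := {g, g'})
    (by simp [hfg.symm, hfg'.symm, hf'g.symm, hf'g'.symm])

theorem exists_mem_left_of_forall_exists_notMem (h : LinkObstruction e P Q) {S : Set κ}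
    (hS : ∀ x, ∃ j ∈ S, x ∉ e j) : ∃ x ∈ P, ∀ j ∉ S, x ∈ e j :=
  (h.symm.common_vertex S).resolve_left fun ⟨x, _, hx⟩ =>
    have ⟨j, hj, hxj⟩ := hS x
    hxj (hx j hj)

theorem exists_mem_right_of_forall_exists_notMem (h : LinkObstruction e P Q) {S : Set κ}
    (hS : ∀ x, ∃ j ∈ S, x ∉ e j) : ∃ x ∈ Q, ∀ j ∉ S, x ∈ e j :=
  h.symm.exists_mem_left_of_forall_exists_notMem hS

theorem notMem_and_notMem (h : LinkObstruction e P Q) {r₁ r₂ : κ} {i : α} (hiP : i ∈ P)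
    (hiQ : i ∈ Q) (hi : ∀ j, j ≠ r₁ → j ≠ r₂ → i ∈ e j) : i ∉ e r₁ ∧ i ∉ e r₂ := by
  have h₁ := h.exists_notMem_ne i hiP hiQ r₁
  have h₂ := h.exists_notMem_ne i hiP hiQ r₂
  grind

section Disjoint

variable {r₁ r₂ : κ}

theorem mem_mem_of_edge_meets (h : LinkObstruction e P Q) (hd : Disjoint (e r₁) (e r₂)) {i : α}
    (hi₁ : i ∉ e r₁) (hi₂ : i ∉ e r₂) (hi : ∀ j, j ≠ r₁ → j ≠ r₂ → i ∈ e j) {f g : κ} {y : α}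
    (hf₁ : f ≠ r₁) (hf₂ : f ≠ r₂) (hg₁ : g ≠ r₁) (hg₂ : g ≠ r₂) (hfg : f ≠ g) (hr : r₁ ≠ r₂)
    (hyf : y ∈ e f) (hy₁ : y ∈ e r₁) :
    y ∈ P ∧ y ∈ Q ∧ ∃ y' ∈ P, y' ∈ e g ∧ y' ∈ e r₁ := by
  classical
  rw [Finset.disjoint_left] at hd
  have hfe := eq_pair_of_mem_of_card_le_two (h.card_edge_le f) (hi f hf₁ hf₂) hyf (by grind)
  have hig := hi g hg₁ hg₂
  obtain ⟨y', -, hy'₁, hy'g⟩ := (h.exists_mem_of_pairs (f := r₂) (f' := f) (g := r₁) (g' := g)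
    hr.symm hg₂.symm hf₁ hfg).resolve_left (by grind)
  have hge := eq_pair_of_mem_of_card_le_two (h.card_edge_le g) hig hy'g (by grind)
  have hfP := h.exists_mem_of_pairs (f := r₁) (f' := f) (g := r₂) (g' := g)
    hr hg₁.symm hf₂ hfg
  have hgP := h.exists_mem_of_pairs (f := r₁) (f' := g) (g := r₂) (g' := f)
    hr hf₁.symm hg₂ hfg.symm
  have hfQ := h.exists_mem_of_pairs (f := r₂) (f' := g) (g := r₁) (g' := f)
    hr.symm hf₂.symm hg₁ hfg.symm
  grind

theorem notMem_of_disjoint_edges_of_center (h : LinkObstruction e P Q) (hr : r₁ ≠ r₂)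
    (hd : Disjoint (e r₁) (e r₂)) {i : α} (hiP : i ∈ P) (hiQ : i ∈ Q)
    (hi : ∀ j, j ≠ r₁ → j ≠ r₂ → i ∈ e j) {f : κ} (hf₁ : f ≠ r₁) (hf₂ : f ≠ r₂) :
    ∀ y ∈ e f, y ∉ e r₁ := by
  classical
  intro y hyf hy₁
  obtain ⟨hi₁, hi₂⟩ := h.notMem_and_notMem hiP hiQ hi
  have meets {g : κ} (hg₁ : g ≠ r₁) (hg₂ : g ≠ r₂) (hfg : f ≠ g) :=
    h.mem_mem_of_edge_meets hd hi₁ hi₂ hi hf₁ hf₂ hg₁ hg₂ hfg hr hyf hy₁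
  obtain ⟨g, hg₁, hg₂, hgf⟩ := h.exists_edge_ne r₁ r₂ f
  obtain ⟨hyP, hyQ, -⟩ := meets hg₁ hg₂ hgf.symm
  obtain ⟨k, hk₂, hyk⟩ := h.exists_notMem_ne y hyP hyQ r₂
  have hk₁ : k ≠ r₁ := by grind
  obtain ⟨-, -, y', hy'P, hy'k, hy'₁⟩ := meets hk₁ hk₂ (by grind)
  rw [Finset.disjoint_left] at hd
  have hP : P = {i, y, y'} := eq_triple_of_mem_of_card_le_three h.card_left_le hiP hyP hy'P
    (by grind) (by grind) (by grind)
  have hfe : e f = {i, y} :=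
    eq_pair_of_mem_of_card_le_two (h.card_edge_le f) (hi f hf₁ hf₂) hyf (by grind)
  rcases h.exists_mem_of_disjoint (S := {r₂}) (S' := {r₁, f, k}) (by grind) with
    ⟨x, hxP, hx⟩ | ⟨x, -, hx⟩ <;>
  · simp only [Set.mem_insert_iff, Set.mem_singleton_iff, forall_eq_or_imp, forall_eq] at hx
    grind

theorem false_of_disjoint_edges_of_center (h : LinkObstruction e P Q) (hr : r₁ ≠ r₂)
    (hd : Disjoint (e r₁) (e r₂)) {i : α} (hiP : i ∈ P) (hiQ : i ∈ Q)
    (hi : ∀ j, j ≠ r₁ → j ≠ r₂ → i ∈ e j) : False := by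
  obtain ⟨f, hf₁, hf₂, -⟩ := h.exists_edge_ne r₁ r₂ r₂
  obtain ⟨g, hg₁, hg₂, hgf⟩ := h.exists_edge_ne r₁ r₂ f
  rcases h.exists_mem_of_pairs hr hg₁.symm hf₂ hgf.symm with ⟨x, -, hx₁, hxf⟩ | ⟨x, -, hx₂, hxg⟩
  · exact h.notMem_of_disjoint_edges_of_center hr hd hiP hiQ hi hf₁ hf₂ x hxf hx₁
  · exact h.notMem_of_disjoint_edges_of_center hr.symm hd.symm hiP hiQ
      (fun j h₂ h₁ => hi j h₁ h₂) hg₂ hg₁ x hxg hx₂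

theorem exists_eq_pair_of_disjoint_edges [DecidableEq α] (h : LinkObstruction e P Q) (hr : r₁ ≠ r₂)
    (hd : Disjoint (e r₁) (e r₂)) :
    ∃ i ∈ Q, ∃ k ∈ P, i ∉ P ∧ k ∉ Q ∧ ∃ r, i ∉ e r ∧ k ∉ e r ∧ ∀ j, j ≠ r → e j = {i, k} := by
  have hd' := Finset.disjoint_left.1 hd
  have no_common : ∀ x, ∃ j ∈ ({r₁, r₂} : Set κ), x ∉ e j := fun x => by
    simpa [← not_and_or] using hd' (a := x)
  obtain ⟨i, hiQ, hi⟩ := h.exists_mem_right_of_forall_exists_notMem no_common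
  obtain ⟨k, hkP, hk⟩ := h.exists_mem_left_of_forall_exists_notMem no_common
  simp only [Set.mem_insert_iff, Set.mem_singleton_iff, not_or, and_imp] at hi hk
  have hik : i ≠ k := by
    rintro rfl
    exact h.false_of_disjoint_edges_of_center hr hd hkP hiQ hi
  have eq_pair {j : κ} : i ∈ e j → k ∈ e j → e j = {i, k} := fun hij hkj =>
    eq_pair_of_mem_of_card_le_two (h.card_edge_le j) hij hkj hik
  obtain ⟨f, hf₁, hf₂, -⟩ := h.exists_edge_ne r₁ r₂ r₂
  obtain ⟨g, hg₁, hg₂, hgf⟩ := h.exists_edge_ne r₁ r₂ f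
  have hf := eq_pair (hi f hf₁ hf₂) (hk f hf₁ hf₂)
  have hg := eq_pair (hi g hg₁ hg₂) (hk g hg₁ hg₂)
  have h₁₂ := h.exists_mem_of_pairs hr hg₁.symm hf₂ hgf.symm
  have h₂₁ := h.exists_mem_of_pairs hr.symm hg₂.symm hf₁ hgf.symm
  rw [hf, hg] at h₁₂ h₂₁
  have hi_missed (hiP : i ∈ P) := h.notMem_and_notMem hiP hiQ hi
  have hk_missed (hkQ : k ∈ Q) := h.notMem_and_notMem hkP hkQ hk
  have hi_d := @hd' i
  have hk_d := @hd' k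
  have hiP : i ∉ P := by grind
  have hkQ : k ∉ Q := by grind
  refine ⟨i, hiQ, k, hkP, hiP, hkQ, ?_⟩
  by_cases hk₁ : k ∈ e r₁
  · exact ⟨r₂, by grind, by grind, fun j hj => eq_pair (by grind) (by grind)⟩
  · exact ⟨r₁, by grind, by grind, fun j hj => eq_pair (by grind) (by grind)⟩

end Disjoint

section Star

variable {z : α}

theorem exists_mem_left_of_star (h : LinkObstruction e P Q) (hz : ∀ j, z ∈ e j) (s : κ) :
    ∃ x ∈ P, x ∈ e s := by
  classical
  have hzP : z ∉ P := fun hP => by simpa [hz] using h.exists_notMem_left z hP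
  have hzQ : z ∉ Q := fun hQ => by simpa [hz] using h.exists_notMem_right z hQ
  have exists_right {s : κ} (hs : ∀ x ∈ P, x ∉ e s) : ∃ y ∈ Q, ∀ j, j ≠ s → y ∈ e j := by
    simpa using (h.common_vertex {s}).resolve_left (by simpa using hs)
  by_contra! hs
  obtain ⟨y, hyQ, hy⟩ := exists_right hs
  have edge_eq {j : κ} (hj : j ≠ s) : e j = {z, y} :=
    eq_pair_of_mem_of_card_le_two (h.card_edge_le j) (hz j) (hy j hj) (by grind)
  have hyP : y ∉ P := fun hP => by
    obtain ⟨j, hj, hyj⟩ := h.exists_notMem_ne y hP hyQ s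
    exact hyj (hy j hj)
  have hys : y ∉ e s := by
    obtain ⟨j, hj⟩ := h.exists_notMem_right y hyQ
    grind
  obtain ⟨s', hs', -⟩ := h.exists_edge_ne s s s
  obtain ⟨y', hy'Q, hy'⟩ := exists_right (s := s') (by rw [edge_eq hs']; grind)
  obtain ⟨s'', hs'', hs''s', -⟩ := h.exists_edge_ne s s' s'
  have hy's := hy' s hs'.symm
  have hy's'' := hy' s'' hs''s'
  rw [edge_eq hs''] at hy's''
  grind

/-- By `exists_mem_left_of_star` the edges are `{z, x j}` with `x j ∈ P ∩ Q`. Splitting two pairs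
of edges in two ways shows that `x` is constant off one edge, so its value is missed only once. -/
theorem false_of_star (h : LinkObstruction e P Q) (hz : ∀ j, z ∈ e j) (s : κ) : False := by
  classical
  have hzP : z ∉ P := fun hP => by simpa [hz] using h.exists_notMem_left z hP
  have hzQ : z ∉ Q := fun hQ => by simpa [hz] using h.exists_notMem_right z hQ
  choose x hxP hxe using h.exists_mem_left_of_star hz
  have edge_eq (j : κ) : e j = {z, x j} :=
    eq_pair_of_mem_of_card_le_two (h.card_edge_le j) (hz j) (hxe j) (by grind)
  have hxQ (j : κ) : x j ∈ Q := by
    obtain ⟨y, hyQ, hy⟩ := h.symm.exists_mem_left_of_star hz j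
    grind
  have agree {f f' g g' : κ} (hx : x f ≠ x f') (h₁ : f ≠ g) (h₂ : f ≠ g') (h₃ : f' ≠ g)
      (h₄ : f' ≠ g') : x g = x g' := by
    have := h.exists_mem_of_pairs h₁ h₂ h₃ h₄
    grind
  obtain ⟨s₂, -, hs₂⟩ := h.exists_notMem_ne (x s) (hxP s) (hxQ s) s
  obtain ⟨s₃, hs₃₂, hs₃⟩ := h.exists_notMem_ne (x s) (hxP s) (hxQ s) s₂
  have eq_of_ne {j : κ} (h₁ : j ≠ s) (h₂ : j ≠ s₂) (h₃ : j ≠ s₃) : x s₂ = x j ∧ x s₃ = x j :=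
    ⟨agree (f := s) (f' := s₃) (by grind) (by grind) (by grind) (by grind) (by grind),
      agree (f := s) (f' := s₂) (by grind) (by grind) (by grind) (by grind) (by grind)⟩
  obtain ⟨s₄, hs₄, hs₄₂, hs₄₃⟩ := h.exists_edge_ne s s₂ s₃
  obtain ⟨j, hj, hxj⟩ := h.exists_notMem_ne (x s₂) (hxP s₂) (hxQ s₂) s
  have := eq_of_ne hs₄ hs₄₂ hs₄₃
  have := hxe j
  grind

end Star

section Triangle

variable [DecidableEq α] {x y z : α} {k l m : κ}

/-- A vertex of the triangle lies in two of its edges, so the third is the only one to miss it. -/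
theorem notMem_right_of_triangle (h : LinkObstruction e P Q) (hk : e k = {y, z})
    (hl : e l = {x, z}) (hm : e m = {x, y}) {w : α} (hwP : w ∈ P) (hw : w = x ∨ w = y ∨ w = z)
    (hwe : ∀ j, j ≠ k → j ≠ l → j ≠ m → w ∈ e j) : w ∉ Q := by
  intro hwQ
  have missing (j : κ) (hj : w ∉ e j) : j = k ∨ j = l ∨ j = m := by
    by_contra! hne
    exact hj (hwe j hne.1 hne.2.1 hne.2.2)
  obtain ⟨s, hs⟩ : ∃ s, ∀ j, w ∉ e j → j = s := by
    rcases hw with rfl | rfl | rfl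
    exacts [⟨k, by grind⟩, ⟨l, by grind⟩, ⟨m, by grind⟩]
  obtain ⟨j, hj, hwj⟩ := h.exists_notMem_ne w hwP hwQ s
  exact hj (hs j hwj)

/-- The edges outside the triangle share vertices `u ∈ P` and `v ∈ Q`, so an outside edge `e r` is a
second copy of the triangle edge `{u, v}`. Pair one copy with the triangle edge at `v` and put
these two on the side of `P`, the other copy with the triangle edge at `u` on the side of `Q`. -/
theorem false_of_triangle (h : LinkObstruction e P Q)
    (hinter : ∀ j j', j ≠ j' → ∃ w ∈ e j, w ∈ e j') (hxy : x ≠ y) (hxz : x ≠ z) (hyz : y ≠ z)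
    (hk : e k = {y, z}) (hl : e l = {x, z}) (hm : e m = {x, y}) : False := by
  have no_common : ∀ w, ∃ j ∈ ({k, l, m} : Set κ), w ∉ e j := fun w => by
    simp only [Set.mem_insert_iff, Set.mem_singleton_iff, exists_eq_or_imp, exists_eq_left]
    grind
  obtain ⟨u, huP, hu⟩ := h.exists_mem_left_of_forall_exists_notMem no_common
  obtain ⟨v, hvQ, hv⟩ := h.exists_mem_right_of_forall_exists_notMem no_common
  simp only [Set.mem_insert_iff, Set.mem_singleton_iff, not_or, and_imp] at hu hv
  obtain ⟨r, hrk, hrl, hrm⟩ := h.exists_edge_ne k l m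
  have hr : e r = {y, z} ∨ e r = {x, z} ∨ e r = {x, y} := by
    have hrk' := hinter r k hrk
    have hrl' := hinter r l hrl
    have hrm' := hinter r m hrm
    have eq_pair {a b : α} := @eq_pair_of_mem_of_card_le_two _ _ _ a b (h.card_edge_le r)
    grind
  have hur := hu r hrk hrl hrm
  have hvr := hv r hrk hrl hrm
  have huQ := h.notMem_right_of_triangle hk hl hm huP (by grind) hu
  have hvP := h.symm.notMem_right_of_triangle hk hl hm hvQ (by grind) hv
  have hru : e r = {u, v} :=
    eq_pair_of_mem_of_card_le_two (h.card_edge_le r) hur hvr (by grind)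
  have hkl : k ≠ l := ne_of_apply_ne (y ∈ e ·) (by grind)
  have hkm : k ≠ m := ne_of_apply_ne (x ∈ e ·) (by grind)
  have hlm : l ≠ m := ne_of_apply_ne (y ∈ e ·) (by grind)
  have h_k := h.exists_mem_of_pairs hkl hkm hrl hrm
  have h_l := h.exists_mem_of_pairs hkl.symm hlm hrk hrm
  have h_m := h.exists_mem_of_pairs hkm.symm hlm.symm hrk hrl
  grind

end Triangle

theorem false_of_intersecting (h : LinkObstruction e P Q)
    (hinter : ∀ j j', j ≠ j' → ∃ w ∈ e j, w ∈ e j') (m : κ) : False := by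
  classical
  have no_star : ∀ w, ∃ j, w ∉ e j := fun w => by
    by_contra! hw
    exact h.false_of_star hw m
  obtain ⟨l₀, hl₀, -⟩ := h.exists_edge_ne m m m
  obtain ⟨x, hxm, -⟩ := hinter m l₀ hl₀.symm
  obtain ⟨k, hxk⟩ := no_star x
  obtain ⟨y, hym, hyk⟩ := hinter m k (by grind)
  obtain ⟨l, hyl⟩ := no_star y
  have hxy : x ≠ y := by grind
  have hm := eq_pair_of_mem_of_card_le_two (h.card_edge_le m) hxm hym hxy
  have hxl : x ∈ e l := by
    obtain ⟨w, hwm, hwl⟩ := hinter m l (by grind)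
    grind
  obtain ⟨z, hzk, hzl⟩ := hinter k l (by grind)
  have hxz : x ≠ z := by grind
  have hyz : y ≠ z := by grind
  exact h.false_of_triangle hinter hxy hxz hyz
    (eq_pair_of_mem_of_card_le_two (h.card_edge_le k) hyk hzk hyz)
    (eq_pair_of_mem_of_card_le_two (h.card_edge_le l) hxl hzl hxz) hm

theorem exists_eq_pair [DecidableEq α] (h : LinkObstruction e P Q) :
    ∃ i ∈ Q, ∃ k ∈ P, i ∉ P ∧ k ∉ Q ∧ ∃ r, i ∉ e r ∧ k ∉ e r ∧ ∀ j, j ≠ r → e j = {i, k} := by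
  by_cases hd : ∃ r₁ r₂, r₁ ≠ r₂ ∧ Disjoint (e r₁) (e r₂)
  · obtain ⟨r₁, r₂, hr, hd⟩ := hd
    exact h.exists_eq_pair_of_disjoint_edges hr hd
  · simp only [not_exists, not_and, Finset.not_disjoint_iff] at hd
    obtain ⟨m⟩ : Nonempty κ := by
      rcases h.common_vertex ∅ with ⟨x, hx, -⟩ | ⟨x, hx, -⟩
      · exact (h.exists_notMem_left x hx).nonempty
      · exact (h.exists_notMem_right x hx).nonempty
    exact (h.false_of_intersecting hd m).elim

end LinkObstruction

section SpecialFamily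

variable {ι α : Type*} {t : ι → Finset α}

theorem exists_forall_mem_of_not_fairFamily_three (hf : FairFamily 2 t) (h : ¬ FairFamily 3 t) :
    ∃ a p q, p ≠ q ∧ a ∉ t p ∧ a ∉ t q ∧ ∀ j, j ≠ p → j ≠ q → a ∈ t j := by
  classical
  obtain ⟨a, K, hK, ha⟩ : ∃ a, ∃ K : Finset ι, K.card < 3 ∧ ∀ j ∉ K, a ∈ t j := by
    simpa [FairFamily] using h
  obtain ⟨p, -, hp⟩ := hf a ∅ (by simp)
  obtain ⟨q, hqp, hq⟩ := hf.exists_notMem_ne a p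
  have hKpq : K = {p, q} := eq_pair_of_mem_of_card_le_two (by lia) (by grind) (by grind) hqp.symm
  exact ⟨a, p, q, hqp.symm, hp, hq, fun j hjp hjq => ha j (by simp [hKpq, hjp, hjq])⟩

variable [DecidableEq α]

/-- The indexed form of `Special`: all but three of the sets equal `{a, b, c}`, and each of the
remaining three contains exactly one of `a`, `b`, `c`, each of them once. That `a`, `b`, `c` and
`j₁`, `j₂`, `j₃` are pairwise distinct follows from the membership conditions. -/
def SpecialFamily (t : ι → Finset α) : Prop :=
  ∃ a b c j₁ j₂ j₃, (∀ j, j ≠ j₁ → j ≠ j₂ → j ≠ j₃ → t j = {a, b, c}) ∧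
    (a ∈ t j₁ ∧ b ∉ t j₁ ∧ c ∉ t j₁) ∧ (a ∉ t j₂ ∧ b ∈ t j₂ ∧ c ∉ t j₂) ∧
    (a ∉ t j₃ ∧ b ∉ t j₃ ∧ c ∈ t j₃)

theorem linkObstruction_of_not_splittable [Fintype ι] (ht : ∀ j, (t j).card ≤ 3)
    (hι : 6 ≤ Fintype.card ι) (hf : FairFamily 2 t) (h : ¬ Splittable t) {a : α} {p q : ι}
    (hpq : p ≠ q) (hp : a ∉ t p) (hq : a ∉ t q) (ha : ∀ j, j ≠ p → j ≠ q → a ∈ t j) :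
    LinkObstruction (fun j : {j // j ≠ p ∧ j ≠ q} => (t j).erase a) (t p) (t q) where
  card_edge_le j := by
    have := ht j
    rw [Finset.card_erase_of_mem (ha j j.2.1 j.2.2)]
    lia
  card_left_le := ht p
  card_right_le := ht q
  exists_notMem_left x hx := by
    obtain ⟨j, hjq, hj⟩ := hf.exists_notMem_ne x q
    exact ⟨⟨j, by grind, hjq⟩, fun hxj => hj (Finset.mem_of_mem_erase hxj)⟩
  exists_notMem_right x hx := by
    obtain ⟨j, hjp, hj⟩ := hf.exists_notMem_ne x p
    exact ⟨⟨j, hjp, by grind⟩, fun hxj => hj (Finset.mem_of_mem_erase hxj)⟩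
  exists_notMem_ne x hxp hxq k := by
    obtain ⟨j, hjk, hj⟩ := hf.exists_notMem_ne x k
    exact ⟨⟨j, by grind, by grind⟩, by simpa [Subtype.ext_iff] using hjk,
      fun hxj => hj (Finset.mem_of_mem_erase hxj)⟩
  common_vertex S := by
    obtain ⟨x, hx | hx⟩ := exists_forall_mem_of_not_splittable h (insert p (Subtype.val '' S))
    · have hxp : x ∈ t p := hx p (Set.mem_insert _ _)
      exact .inl ⟨x, hxp, fun j hj => Finset.mem_erase.2 ⟨ne_of_mem_of_not_mem hxp hp,
        hx j (Set.mem_insert_of_mem _ (Set.mem_image_of_mem _ hj))⟩⟩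
    · have hxq : x ∈ t q := hx q (by simp [hpq.symm])
      exact .inr ⟨x, hxq, fun j hj => Finset.mem_erase.2 ⟨ne_of_mem_of_not_mem hxq hq,
        hx j (by simp [j.2.1, j.2.2, hj])⟩⟩
  exists_edge_ne j₁ j₂ j₃ := by
    classical
    obtain ⟨j, -, hj⟩ := Finset.exists_mem_notMem_of_card_lt_card
      (s := ({p, q, j₁.1, j₂.1, j₃.1} : Finset ι)) (t := Finset.univ)
      (Finset.card_le_five.trans_lt (by rw [Finset.card_univ]; lia))
    simp only [Finset.mem_insert, Finset.mem_singleton, not_or] at hj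
    exact ⟨⟨j, hj.1, hj.2.1⟩, by grind, by grind, by grind⟩

theorem splittable_of_fairFamily_two [Fintype ι] (ht : ∀ j, (t j).card ≤ 3)
    (hι : 6 ≤ Fintype.card ι) (hf : FairFamily 2 t) (hs : ¬ SpecialFamily t) : Splittable t := by
  by_contra h
  obtain ⟨a, p, q, hpq, hp, hq, ha⟩ := exists_forall_mem_of_not_fairFamily_three hf
    fun hf₃ => h (splittable_of_fairFamily_three ht hf₃)
  obtain ⟨i, hiq, k, hkp, hip, hkq, ⟨r, hrp, hrq⟩, hir, hkr, hlink⟩ :=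
    (linkObstruction_of_not_splittable ht hι hf h hpq hp hq ha).exists_eq_pair
  have har := ha r hrp hrq
  refine hs ⟨a, i, k, r, q, p, fun j hjr hjq hjp => ?_, ⟨har, by grind, by grind⟩,
    ⟨hq, hiq, hkq⟩, hp, hip, hkp⟩
  rw [← Finset.insert_erase (ha j hjp hjq), hlink ⟨j, hjp, hjq⟩ (by simpa using hjr)]

end SpecialFamily

section SmallClasses

variable {ι α : Type*} {t : ι → Finset α} {S : Set ι} {k : ℕ}

/-- One set of the class, together with one set missing each of its elements, is enough. -/
theorem exists_finset_subset_card_le_succ [Nonempty α] (ht : ∀ j, (t j).card ≤ k)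
    (hS : ∀ x, ∃ j ∈ S, x ∉ t j) :
    ∃ A : Finset ι, ↑A ⊆ S ∧ A.card ≤ k + 1 ∧ ∀ x, ∃ j ∈ A, x ∉ t j := by
  classical
  choose m hmS hm using hS
  obtain ⟨o, ho⟩ : ∃ o, o ∈ S := ⟨_, hmS (Classical.arbitrary α)⟩
  refine ⟨insert o ((t o).image m), ?_, ?_, fun x => ?_⟩
  · simp only [Finset.coe_insert, Finset.coe_image, Set.insert_subset_iff, Set.image_subset_iff]
    exact ⟨ho, fun x _ => hmS x⟩
  · exact (Finset.card_insert_le _ _).trans (by grw [Finset.card_image_le, ht o])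
  · by_cases hx : x ∈ t o
    · exact ⟨m x, Finset.mem_insert_of_mem (Finset.mem_image_of_mem m hx), hm x⟩
    · exact ⟨o, Finset.mem_insert_self _ _, hx⟩

end SmallClasses

section Multisets

variable {ι : Type*} [Fintype ι] {t : ι → Finset ℕ+} {c k : ℕ}

theorem CFair.fairFamily (h : CFair c (Finset.univ.val.map t)) (hc : c ≤ Fintype.card ι) :
    FairFamily c t := by
  intro x K hK
  by_contra! hx
  obtain ⟨j, -, hj⟩ := Finset.exists_mem_notMem_of_card_lt_card (s := K) (t := Finset.univ)
    (by rw [Finset.card_univ]; lia)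
  have hcard : c ≤ (Finset.univ.filter (x ∉ t ·)).card := by
    have := h x ⟨t j, Multiset.mem_map_of_mem t (Finset.mem_univ j), hx j hj⟩
    rwa [Multiset.filter_map, Multiset.card_map] at this
  have hsub : Finset.univ.filter (x ∉ t ·) ⊆ K := fun j hj => by
    by_contra hjK
    exact (Finset.mem_filter.1 hj).2 (hx j hjK)
  have := Finset.card_le_card hsub
  lia

theorem SpecialFamily.special (h : SpecialFamily t) : Special (Finset.univ.val.map t) := by
  classical
  obtain ⟨a, b, c, j₁, j₂, j₃, hrest, h₁, h₂, h₃⟩ := h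
  have h₁₂ : j₁ ≠ j₂ := by grind
  have h₁₃ : j₁ ≠ j₃ := by grind
  have h₂₃ : j₂ ≠ j₃ := by grind
  refine ⟨a, b, c, by grind, by grind, by grind, t j₁, t j₂, t j₃, ?_, by tauto⟩
  set J : Finset ι := {j₁, j₂, j₃} with hJ
  have hJval : J.val = {j₁, j₂, j₃} := by simp [hJ, h₁₂, h₁₃, h₂₃]
  have hJcard : J.card = 3 := Finset.card_eq_three.2 ⟨j₁, j₂, j₃, h₁₂, h₁₃, h₂₃, rfl⟩
  have huniv : Finset.univ.val = Jᶜ.val + J.val := by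
    rw [Finset.compl_eq_univ_sdiff, Finset.sdiff_val,
      tsub_add_cancel_of_le (Finset.val_le_iff.2 J.subset_univ)]
  have hcompl : Jᶜ.val.map t =
      Multiset.replicate (Multiset.card (Finset.univ.val.map t) - 3) {a, b, c} := by
    refine Multiset.eq_replicate.2 ⟨?_, fun u hu => ?_⟩
    · simp only [Multiset.card_map, Finset.card_val, Finset.card_univ, Finset.card_compl, hJcard]
    · obtain ⟨j, hj, rfl⟩ := Multiset.mem_map.1 hu
      simp only [Finset.mem_val, Finset.mem_compl, hJ, Finset.mem_insert, Finset.mem_singleton,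
        not_or] at hj
      exact hrest j hj.1 hj.2.1 hj.2.2
  rw [← hcompl, huniv, Multiset.map_add, hJval]
  rfl

theorem Splittable.exists_nicePartialColoring (h : Splittable t) (ht : ∀ j, (t j).card ≤ k) :
    ∃ f : Fin 2 → Multiset (Finset ℕ+),
      NicePartialColoring 2 (Finset.univ.val.map t) f ∧ ∀ j, Multiset.card (f j) ≤ k + 1 := by
  obtain ⟨S, hS⟩ := h
  obtain ⟨A, hAS, hAcard, hA⟩ := exists_finset_subset_card_le_succ ht fun x => (hS x).1
  obtain ⟨B, hBS, hBcard, hB⟩ := exists_finset_subset_card_le_succ (S := Sᶜ) ht fun x => (hS x).2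
  have hAB : Disjoint A B := Finset.disjoint_left.2 fun j hjA hjB => hBS hjB (hAS hjA)
  refine ⟨![A.val.map t, B.val.map t], ⟨?_, ?_⟩, by simp [Fin.forall_fin_two, hAcard, hBcard]⟩
  · calc ∑ j, ![A.val.map t, B.val.map t] j = (A.disjUnion B hAB).val.map t := by
          simp [Finset.disjUnion_val]
      _ ≤ Finset.univ.val.map t := Multiset.map_le_map (Finset.val_le_iff.2 (Finset.subset_univ _))
  · have exists_map {C : Finset ι} (hC : ∀ x, ∃ j ∈ C, x ∉ t j) (x : ℕ+) :
        ∃ u ∈ C.val.map t, x ∉ u := by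
      simpa using hC x
    exact Fin.forall_fin_two.2 ⟨fun x _ => exists_map hA x, fun x _ => exists_map hB x⟩

end Multisets

section NicePartialColoring

variable {c : ℕ} {T : Multiset (Finset ℕ+)} {f : Fin c → Multiset (Finset ℕ+)}

theorem NicePartialColoring.mul_le_card_filter {m : ℕ} (hf : NicePartialColoring c T f)
    {p : Finset ℕ+ → Prop} [DecidablePred p] (hp : ∀ j, m ≤ Multiset.card ((f j).filter p)) :
    c * m ≤ Multiset.card (T.filter p) := by
  simp only [← Multiset.countP_eq_card_filter] at hp ⊢
  calc c * m = ∑ _j : Fin c, m := by simp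
    _ ≤ ∑ j, (f j).countP p := Finset.sum_le_sum fun j _ => hp j
    _ = (∑ j, f j).countP p := (map_sum (Multiset.countPAddMonoidHom p) f Finset.univ).symm
    _ ≤ T.countP p := Multiset.countP_le_of_le p hf.1

theorem NicePartialColoring.cFair (hf : NicePartialColoring c T f) : CFair c T := by
  intro i hi
  have hclass (j : Fin c) : 1 ≤ Multiset.card ((f j).filter (i ∉ ·)) := by
    obtain ⟨t, ht, hit⟩ := hf.2 j i hi
    exact Multiset.card_pos_iff_exists_mem.2 ⟨t, Multiset.mem_filter.2 ⟨ht, hit⟩⟩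
  simpa using hf.mul_le_card_filter hclass

/-- A set other than `s` in a color class meets `s` in some `x`, and the set of that class missing
`x` is a second one. -/
theorem NicePartialColoring.mul_two_le_card_filter_ne (hf : NicePartialColoring c T f)
    {s : Finset ℕ+} (hs : s.Nonempty) (hsT : ∀ x ∈ s, ∃ t ∈ T, x ∈ t)
    (hmeet : ∀ t ∈ T, ∃ x ∈ s, x ∈ t) : c * 2 ≤ Multiset.card (T.filter (· ≠ s)) := by
  refine hf.mul_le_card_filter fun j => ?_
  have hjT : f j ≤ T := (Finset.single_le_sum (fun _ _ => zero_le) (Finset.mem_univ j)).trans hf.1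
  obtain ⟨x₀, hx₀⟩ := hs
  obtain ⟨t, ht, hx₀t⟩ := hf.2 j x₀ (hsT x₀ hx₀)
  obtain ⟨x, hxs, hxt⟩ := hmeet t (Multiset.mem_of_le hjT ht)
  obtain ⟨t', ht', hxt'⟩ := hf.2 j x (hsT x hxs)
  have one_lt : 1 < ((f j).filter (· ≠ s)).toFinset.card :=
    Finset.one_lt_card.2 ⟨t, by grind [Multiset.mem_filter], t',
      by grind [Multiset.mem_filter], by grind⟩
  exact one_lt.trans_le (Multiset.toFinset_card_le _)

theorem NicePartialColoring.not_special {f : Fin 2 → Multiset (Finset ℕ+)}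
    (hf : NicePartialColoring 2 T f) : ¬ Special T := by
  rintro ⟨a, b, c, -, -, -, t₁, t₂, t₃, hT, h₁, -, -, -, h₂, -, -, -, h₃⟩
  generalize Multiset.card T - 3 = n at hT
  set s : Finset ℕ+ := {a, b, c} with hs
  have mem_s : a ∈ s ∧ b ∈ s ∧ c ∈ s := by simp [hs]
  have mem_iff {t : Finset ℕ+} : t ∈ T ↔ t = t₁ ∨ t = t₂ ∨ n ≠ 0 ∧ t = s ∨ t = t₃ := by
    simp [hT, Multiset.mem_replicate]
  have appears : ∀ x ∈ s, ∃ t ∈ T, x ∈ t := by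
    simp only [hs, Finset.mem_insert, Finset.mem_singleton]
    grind
  have four_le : 2 * 2 ≤ Multiset.card (T.filter (· ≠ s)) :=
    hf.mul_two_le_card_filter_ne ⟨a, mem_s.1⟩ appears (by grind)
  have le_three : Multiset.card (T.filter (· ≠ s)) ≤ 3 := by
    rw [hT, Multiset.filter_add, Multiset.filter_eq_nil.2 (by simp [Multiset.mem_replicate]),
      zero_add]
    exact Multiset.card_le_card (Multiset.filter_le _ _)
  lia

end NicePartialColoring

theorem nice_partial_two_coloring_four_iff_general
    (T : Multiset (Finset ℕ+)) (hT : ∀ t ∈ T, t.card ≤ 3) (hn : 6 ≤ Multiset.card T) :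
    (∃ f : Fin 2 → Multiset (Finset ℕ+),
        NicePartialColoring 2 T f ∧ ∀ j, Multiset.card (f j) ≤ 4) ↔
      (CFair 2 T ∧ ¬ Special T) := by
  constructor
  · rintro ⟨f, hf, -⟩
    exact ⟨hf.cFair, hf.not_special⟩
  · rintro ⟨hfair, hspecial⟩
    obtain ⟨ι, _, t, rfl⟩ : ∃ (ι : Type) (_ : Fintype ι) (t : ι → Finset ℕ+),
        Finset.univ.val.map t = T := ⟨T, inferInstance, _, Multiset.map_univ_coe T⟩
    have ht (j : ι) : (t j).card ≤ 3 := hT _ (Multiset.mem_map_of_mem t (Finset.mem_univ j))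
    have hι : 6 ≤ Fintype.card ι := by simpa using hn
    have hsplit : Splittable t := splittable_of_fairFamily_two ht hι
      (hfair.fairFamily (by lia)) fun h => hspecial h.special
    exact hsplit.exists_nicePartialColoring ht

/-- A finite multiset of `n ≥ 6` triples admits a nice partial 2-coloring coloring at
most `4` triples with each of the two colors if and only if it is fair and
non-special. -/
theorem nice_partial_two_coloring_four_iff
    (T : Multiset (Finset ℕ+)) (hT : ∀ t ∈ T, t.card = 3)
    (hn : 6 ≤ Multiset.card T) :
    (∃ f : Fin 2 → Multiset (Finset ℕ+),
        NicePartialColoring 2 T f ∧ ∀ j, Multiset.card (f j) ≤ 4) ↔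
      (CFair 2 T ∧ ¬ Special T) :=
  nice_partial_two_coloring_four_iff_general T (fun t ht => (hT t ht).le) hn
end
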